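/- For each fixed i ≥ 0, the sequence {H^i(F′_n; Q)} of rational cohomology groups of the Lagrangian flag varieties F′_n, regarded as representations of the hyperoctahedral groups W_n with the maps induced by the inclusions F′_n ↪ F′_{n+1}, is representation stable in the reversed-maps sense. Equivalently (by Borel's theorem), for each fixed i the sequence of degree-i graded pieces of the coinvariant algebras of the Weyl groups W_n is representation stable: for each double partition λ, the multiplicity of V(λ)_n in the degree-i piece is constant for sufficiently large n. -/

import Mathlib

open Equiv

/-! ### Generic representation-theoretic helpers -/

/-- The restriction of a representation to an invariant submodule. -/
def Representation.subrep {k G V : Type*} [CommSemiring k] [Monoid G] [AddCommMonoid V]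
    [Module k V] (ρ : Representation k G V) (p : Submodule k V)
    (h : ∀ g : G, ∀ v ∈ p, ρ g v ∈ p) : Representation k G p where
  toFun g := (ρ g).restrict (fun v hv => h g v hv)
  map_one' := LinearMap.ext fun v => Subtype.ext (by simp [LinearMap.restrict_apply])
  map_mul' g₁ g₂ := LinearMap.ext fun v => Subtype.ext (by
    simp [LinearMap.restrict_apply, map_mul])

/-- A `G`-action on `H` induces a representation `G →* End(H →₀ k)` in the natural way
(Mathlib's former `Representation.ofMulAction`). -/
noncomputable def Representation.ofMulActionFinsupp (k : Type*) [CommSemiring k] (G : Type*)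
    [Monoid G] (H : Type*) [MulAction G H] : Representation k G (H →₀ k) where
  toFun g := Finsupp.lmapDomain k k (g • ·)
  map_one' := by
    ext x y
    simp
  map_mul' x y := by
    ext z w
    simp [mul_smul]

/-- The space of `G`-equivariant linear maps between two representations. -/
def RepHom {k G V W : Type*} [CommSemiring k] [Monoid G] [AddCommMonoid V] [Module k V]
    [AddCommMonoid W] [Module k W] (ρ : Representation k G V) (σ : Representation k G W) :
    Submodule k (V →ₗ[k] W) where
  carrier := {f | ∀ g v, f (ρ g v) = σ g (f v)}
  add_mem' := by
    intro f₁ f₂ h₁ h₂ g v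
    simp [h₁ g v, h₂ g v]
  zero_mem' := by intro g v; simp
  smul_mem' := by
    intro c f h g v
    simp [h g v]

/-- A representation is irreducible if it is nonzero and has no proper nonzero invariant
submodule. -/
def IsIrreducibleRep {k G V : Type*} [CommSemiring k] [Monoid G] [AddCommMonoid V]
    [Module k V] (ρ : Representation k G V) : Prop :=
  (∃ v : V, v ≠ 0) ∧
    ∀ q : Submodule k V, (∀ g : G, ∀ v ∈ q, ρ g v ∈ q) → q = ⊥ ∨ q = ⊤

/-- The multiplicity of (an irreducible) representation `ρ` in `σ`, defined as the dimension
of the space of equivariant maps (over `ℚ` all the relevant irreducibles are absolutely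
irreducible, so this is the usual multiplicity). -/
noncomputable def repMult {G V W : Type*} [Monoid G] [AddCommGroup V] [Module ℚ V]
    [AddCommGroup W] [Module ℚ W] (ρ : Representation ℚ G V) (σ : Representation ℚ G W) : ℕ :=
  Module.finrank ℚ (RepHom ρ σ)

/-! ### The standard inclusions of symmetric groups -/

/-- `Fin m` is equivalent to the subtype of `Fin n` of elements `< m`, when `m ≤ n`. -/
def finCastEquivLe {m n : ℕ} (h : m ≤ n) : Fin m ≃ {i : Fin n // (i : ℕ) < m} where
  toFun i := ⟨⟨(i : ℕ), lt_of_lt_of_le i.isLt h⟩, i.isLt⟩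
  invFun j := ⟨(j.1 : ℕ), j.2⟩
  left_inv i := rfl
  right_inv j := by ext; rfl

/-- The standard inclusion `S_m ↪ S_n` for `m ≤ n`, acting on the first `m` letters. -/
def inclPermLe {m n : ℕ} (h : m ≤ n) : Equiv.Perm (Fin m) →* Equiv.Perm (Fin n) :=
  Equiv.Perm.extendDomainHom (finCastEquivLe h)

/-- The standard inclusion `S_n ↪ S_{n+1}`. -/
def inclPerm (n : ℕ) : Equiv.Perm (Fin n) →* Equiv.Perm (Fin (n + 1)) :=
  inclPermLe (Nat.le_succ n)

/-! ### Partitions -/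

/-- A partition (of its `size`), recorded as a weakly decreasing list of positive parts. -/
structure NatPartition : Type where
  parts : List ℕ
  sorted : parts.Pairwise (· ≥ ·)
  pos : ∀ p ∈ parts, 0 < p

namespace NatPartition

/-- The number `k` being partitioned. -/
def size (lam : NatPartition) : ℕ := lam.parts.sum

/-- The largest part `λ₁`. -/
def width (lam : NatPartition) : ℕ := lam.parts.headD 0

/-- The smallest `n` for which the padded partition `λ[n]` is defined,
namely `|λ| + λ₁`. -/
def minN (lam : NatPartition) : ℕ := lam.size + lam.width

end NatPartition

/-! ### An abstract system of irreducible `S_n`-representations `V(λ)_n`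

We axiomatize the family `λ ↦ V(λ)_n` (the irreducible rational representation of `S_n`
attached to the padded partition `λ[n]`), realized inside the left regular representation:
for each partition `λ` and each `n ≥ |λ| + λ₁` an invariant subspace of `ℚ[S_n]` which is
irreducible, such that distinct partitions give non-isomorphic representations, every
irreducible representation of `S_n` occurs, and the restriction of `V(λ)_{n+1}` to `S_n`
contains `V(λ)_n` (this pins down the labelling, by the branching rule). -/
structure SnIrrSystem : Type 1 where
  V : NatPartition → ∀ n : ℕ, Submodule ℚ (Equiv.Perm (Fin n) →₀ ℚ)
  inv : ∀ lam n (g : Equiv.Perm (Fin n)), ∀ x ∈ V lam n,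
    Representation.ofMulActionFinsupp ℚ (Equiv.Perm (Fin n)) (Equiv.Perm (Fin n)) g x ∈ V lam n
  irr : ∀ lam n, lam.minN ≤ n →
    IsIrreducibleRep ((Representation.ofMulActionFinsupp ℚ (Equiv.Perm (Fin n))
      (Equiv.Perm (Fin n))).subrep (V lam n) (inv lam n))
  noniso : ∀ lam mu n, lam.minN ≤ n → mu.minN ≤ n → lam ≠ mu →
    ∀ f : ↥(V lam n) →ₗ[ℚ] ↥(V mu n),
      f ∈ RepHom ((Representation.ofMulActionFinsupp ℚ (Equiv.Perm (Fin n))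
          (Equiv.Perm (Fin n))).subrep (V lam n) (inv lam n))
        ((Representation.ofMulActionFinsupp ℚ (Equiv.Perm (Fin n))
          (Equiv.Perm (Fin n))).subrep (V mu n) (inv mu n)) →
      ¬ Function.Bijective f
  complete : ∀ n (W : Type) [AddCommGroup W] [Module ℚ W]
    (σ : Representation ℚ (Equiv.Perm (Fin n)) W), IsIrreducibleRep σ →
    ∃ lam : NatPartition, lam.minN ≤ n ∧ ∃ f : ↥(V lam n) →ₗ[ℚ] W,
      f ∈ RepHom ((Representation.ofMulActionFinsupp ℚ (Equiv.Perm (Fin n))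
          (Equiv.Perm (Fin n))).subrep (V lam n) (inv lam n)) σ ∧ Function.Bijective f
  branch : ∀ lam n, lam.minN ≤ n → ∃ f : ↥(V lam n) →ₗ[ℚ] ↥(V lam (n + 1)),
    f ≠ 0 ∧ f ∈ RepHom ((Representation.ofMulActionFinsupp ℚ (Equiv.Perm (Fin n))
        (Equiv.Perm (Fin n))).subrep (V lam n) (inv lam n))
      (((Representation.ofMulActionFinsupp ℚ (Equiv.Perm (Fin (n + 1)))
          (Equiv.Perm (Fin (n + 1)))).subrep (V lam (n + 1)) (inv lam (n + 1))).comp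
        (inclPerm n))

namespace SnIrrSystem

/-- The irreducible representation `V(λ)_n` of the system. -/
noncomputable def rep (S : SnIrrSystem) (lam : NatPartition) (n : ℕ) :
    Representation ℚ (Equiv.Perm (Fin n)) ↥(S.V lam n) :=
  (Representation.ofMulActionFinsupp ℚ (Equiv.Perm (Fin n)) (Equiv.Perm (Fin n))).subrep
    (S.V lam n) (S.inv lam n)

/-- The multiplicity of `V(λ)_n` in a representation `σ` of `S_n`. -/
noncomputable def mult (S : SnIrrSystem) (lam : NatPartition) {n : ℕ} {W : Type*}
    [AddCommGroup W] [Module ℚ W] (σ : Representation ℚ (Equiv.Perm (Fin n)) W) : ℕ :=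
  repMult (S.rep lam n) σ

end SnIrrSystem

/-! ### Representation stability for sequences of `S_n`-representations -/

section SnStability

variable {M : ℕ → Type*} [∀ n, AddCommGroup (M n)] [∀ n, Module ℚ (M n)]

/-- A sequence of `S_n`-representations with maps `φ_n : V_n → V_{n+1}` is consistent if the
maps intertwine the `S_n`-action with the `S_{n+1}`-action via the standard inclusion. -/
def SnConsistent (ρ : ∀ n, Representation ℚ (Equiv.Perm (Fin n)) (M n))
    (φ : ∀ n, M n →ₗ[ℚ] M (n + 1)) : Prop :=
  ∀ n (g : Equiv.Perm (Fin n)) (v : M n),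
    φ n (ρ n g v) = ρ (n + 1) (inclPerm n g) (φ n v)

/-- Condition II (surjectivity): the span of the `S_{n+1}`-orbit of `φ_n(V_n)` is all of
`V_{n+1}`. -/
def SnSurjSpan (ρ : ∀ n, Representation ℚ (Equiv.Perm (Fin n)) (M n))
    (φ : ∀ n, M n →ₗ[ℚ] M (n + 1)) (n : ℕ) : Prop :=
  Submodule.span ℚ {x : M (n + 1) | ∃ (g : Equiv.Perm (Fin (n + 1))) (v : M n),
    x = ρ (n + 1) g (φ n v)} = ⊤

/-- Condition III (multiplicity stability): for each `λ`, the multiplicity of `V(λ)_n`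
is eventually constant. -/
def SnMultStable (S : SnIrrSystem)
    (ρ : ∀ n, Representation ℚ (Equiv.Perm (Fin n)) (M n)) : Prop :=
  ∀ lam : NatPartition, ∃ N, lam.minN ≤ N ∧
    ∀ n, N ≤ n → S.mult lam (ρ n) = S.mult lam (ρ N)

/-- Condition III′ (uniform multiplicity stability): the stabilization point can be chosen
independently of `λ`; moreover any `λ` for which `V(λ)_N` is not defined has multiplicity `0`
from then on. -/
def SnUnifMultStable (S : SnIrrSystem)
    (ρ : ∀ n, Representation ℚ (Equiv.Perm (Fin n)) (M n)) : Prop :=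
  ∃ N, (∀ lam : NatPartition, lam.minN ≤ N → ∀ n, N ≤ n →
      S.mult lam (ρ n) = S.mult lam (ρ N)) ∧
    (∀ lam : NatPartition, N < lam.minN → ∀ n, lam.minN ≤ n → S.mult lam (ρ n) = 0)

/-- Representation stability for a consistent sequence of `S_n`-representations. -/
def SnRepStable (S : SnIrrSystem)
    (ρ : ∀ n, Representation ℚ (Equiv.Perm (Fin n)) (M n))
    (φ : ∀ n, M n →ₗ[ℚ] M (n + 1)) : Prop :=
  (∃ N, ∀ n, N ≤ n → Function.Injective (φ n) ∧ SnSurjSpan ρ φ n) ∧ SnMultStable S ρ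

/-- Uniform representation stability. -/
def SnUnifRepStable (S : SnIrrSystem)
    (ρ : ∀ n, Representation ℚ (Equiv.Perm (Fin n)) (M n))
    (φ : ∀ n, M n →ₗ[ℚ] M (n + 1)) : Prop :=
  (∃ N, ∀ n, N ≤ n → Function.Injective (φ n) ∧ SnSurjSpan ρ φ n) ∧ SnUnifMultStable S ρ

end SnStability

/-! ### The hyperoctahedral groups -/

lemma inclPermLe_apply_lt {m n : ℕ} (h : m ≤ n) (σ : Equiv.Perm (Fin m)) (j : Fin n)
    (hj : (j : ℕ) < m) :
    inclPermLe h σ j = ⟨(σ ⟨(j : ℕ), hj⟩ : Fin m), lt_of_lt_of_le (σ ⟨(j : ℕ), hj⟩).isLt h⟩ := by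
  show (σ.extendDomain (finCastEquivLe h)) j = _
  rw [Equiv.Perm.extendDomain_apply_subtype (b := j) σ (finCastEquivLe h) hj]
  rfl

lemma inclPermLe_apply_not_lt {m n : ℕ} (h : m ≤ n) (σ : Equiv.Perm (Fin m)) (j : Fin n)
    (hj : ¬ (j : ℕ) < m) : inclPermLe h σ j = j := by
  show (σ.extendDomain (finCastEquivLe h)) j = _
  exact Equiv.Perm.extendDomain_apply_not_subtype (b := j) σ (finCastEquivLe h) hj

/-- The permutation action of `S_n` on sign vectors, as a homomorphism into `MulAut`. -/
def permMulAut (n : ℕ) : Equiv.Perm (Fin n) →* MulAut (Fin n → ℤˣ) where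
  toFun σ :=
    { toFun := fun ε => ε ∘ (σ⁻¹ : Equiv.Perm (Fin n))
      invFun := fun ε => ε ∘ (σ : Equiv.Perm (Fin n))
      left_inv := fun ε => by funext i; simp [Function.comp]
      right_inv := fun ε => by funext i; simp [Function.comp]
      map_mul' := fun ε₁ ε₂ => rfl }
  map_one' := by
    apply MulEquiv.ext
    intro ε
    funext i
    simp
  map_mul' σ τ := by
    apply MulEquiv.ext
    intro ε
    funext i
    simp [Function.comp, mul_inv_rev]

/-- The hyperoctahedral group `W_n = (ℤ/2) ≀ S_n`, realized as the semidirect product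
`(ℤ/2)ⁿ ⋊ S_n` of sign vectors by permutations. -/
abbrev Wgroup (n : ℕ) : Type :=
  (Fin n → ℤˣ) ⋊[permMulAut n] Equiv.Perm (Fin n)

/-- Extension of a sign vector by `+1` in the last coordinate. -/
def extendSigns (n : ℕ) : (Fin n → ℤˣ) →* (Fin (n + 1) → ℤˣ) where
  toFun ε := fun j => if h : (j : ℕ) < n then ε ⟨(j : ℕ), h⟩ else 1
  map_one' := by funext j; by_cases h : (j : ℕ) < n <;> simp [h]
  map_mul' ε₁ ε₂ := by funext j; by_cases h : (j : ℕ) < n <;> simp [h]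

/-- The standard inclusion `W_n ↪ W_{n+1}`. -/
def inclW (n : ℕ) : Wgroup n →* Wgroup (n + 1) :=
  SemidirectProduct.map (extendSigns n) (inclPerm n) (by
    intro σ
    apply MonoidHom.ext
    intro ε
    funext j
    by_cases hj : (j : ℕ) < n
    · have h1 : ((inclPerm n σ)⁻¹ : Equiv.Perm (Fin (n + 1))) j =
          ⟨((σ⁻¹ : Equiv.Perm (Fin n)) ⟨(j : ℕ), hj⟩ : Fin n), by
            exact lt_of_lt_of_le ((σ⁻¹ : Equiv.Perm (Fin n)) ⟨(j : ℕ), hj⟩).isLt (Nat.le_succ n)⟩ := by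
        rw [← map_inv]
        exact inclPermLe_apply_lt (Nat.le_succ n) σ⁻¹ j hj
      simp only [MonoidHom.comp_apply, MulEquiv.toMonoidHom_eq_coe, MonoidHom.coe_coe]
      show (extendSigns n) (ε ∘ (σ⁻¹ : Equiv.Perm (Fin n))) j =
        ((extendSigns n ε) ∘ ((inclPerm n σ)⁻¹ : Equiv.Perm (Fin (n + 1)))) j
      simp only [Function.comp_apply, h1, extendSigns, MonoidHom.coe_mk, OneHom.coe_mk]
      simp [hj]
    · have h1 : ((inclPerm n σ)⁻¹ : Equiv.Perm (Fin (n + 1))) j = j := by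
        rw [← map_inv]
        exact inclPermLe_apply_not_lt (Nat.le_succ n) σ⁻¹ j hj
      show (extendSigns n) (ε ∘ (σ⁻¹ : Equiv.Perm (Fin n))) j =
        ((extendSigns n ε) ∘ ((inclPerm n σ)⁻¹ : Equiv.Perm (Fin (n + 1)))) j
      simp only [Function.comp_apply, h1, extendSigns, MonoidHom.coe_mk, OneHom.coe_mk]
      simp [hj])

/-! ### Double partitions and an abstract system of irreducible `W_n`-representations -/

/-- A double partition `(λ⁺, λ⁻)`. -/
abbrev DoublePartition : Type := NatPartition × NatPartition

/-- The smallest `n` for which the padded double partition `λ[n]` is defined. -/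
def DoublePartition.minN (lam : DoublePartition) : ℕ :=
  lam.1.size + lam.2.size + lam.1.width

/-- An abstract system of the irreducible rational representations `V(λ)_n` of the
hyperoctahedral groups, indexed by double partitions `λ` padded to `n`; cf. `SnIrrSystem`. -/
structure WnIrrSystem : Type 1 where
  V : DoublePartition → ∀ n : ℕ, Submodule ℚ (Wgroup n →₀ ℚ)
  inv : ∀ lam n (g : Wgroup n), ∀ x ∈ V lam n,
    Representation.ofMulActionFinsupp ℚ (Wgroup n) (Wgroup n) g x ∈ V lam n
  irr : ∀ lam n, lam.minN ≤ n →
    IsIrreducibleRep ((Representation.ofMulActionFinsupp ℚ (Wgroup n) (Wgroup n)).subrep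
      (V lam n) (inv lam n))
  noniso : ∀ lam mu n, lam.minN ≤ n → mu.minN ≤ n → lam ≠ mu →
    ∀ f : ↥(V lam n) →ₗ[ℚ] ↥(V mu n),
      f ∈ RepHom ((Representation.ofMulActionFinsupp ℚ (Wgroup n) (Wgroup n)).subrep
          (V lam n) (inv lam n))
        ((Representation.ofMulActionFinsupp ℚ (Wgroup n) (Wgroup n)).subrep
          (V mu n) (inv mu n)) →
      ¬ Function.Bijective f
  complete : ∀ n (W : Type) [AddCommGroup W] [Module ℚ W]
    (σ : Representation ℚ (Wgroup n) W), IsIrreducibleRep σ →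
    ∃ lam : DoublePartition, lam.minN ≤ n ∧ ∃ f : ↥(V lam n) →ₗ[ℚ] W,
      f ∈ RepHom ((Representation.ofMulActionFinsupp ℚ (Wgroup n) (Wgroup n)).subrep
        (V lam n) (inv lam n)) σ ∧ Function.Bijective f
  branch : ∀ lam n, lam.minN ≤ n → ∃ f : ↥(V lam n) →ₗ[ℚ] ↥(V lam (n + 1)),
    f ≠ 0 ∧ f ∈ RepHom ((Representation.ofMulActionFinsupp ℚ (Wgroup n) (Wgroup n)).subrep
        (V lam n) (inv lam n))
      (((Representation.ofMulActionFinsupp ℚ (Wgroup (n + 1)) (Wgroup (n + 1))).subrep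
          (V lam (n + 1)) (inv lam (n + 1))).comp (inclW n))

namespace WnIrrSystem

/-- The irreducible representation `V(λ)_n` of the system. -/
noncomputable def rep (S : WnIrrSystem) (lam : DoublePartition) (n : ℕ) :
    Representation ℚ (Wgroup n) ↥(S.V lam n) :=
  (Representation.ofMulActionFinsupp ℚ (Wgroup n) (Wgroup n)).subrep (S.V lam n) (S.inv lam n)

/-- The multiplicity of `V(λ)_n` in a representation `σ` of `W_n`. -/
noncomputable def mult (S : WnIrrSystem) (lam : DoublePartition) {n : ℕ} {W : Type*}
    [AddCommGroup W] [Module ℚ W] (σ : Representation ℚ (Wgroup n) W) : ℕ :=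
  repMult (S.rep lam n) σ

end WnIrrSystem

section WnStability

variable {M : ℕ → Type*} [∀ n, AddCommGroup (M n)] [∀ n, Module ℚ (M n)]

/-- Consistency for a sequence of `W_n`-representations. -/
def WnConsistent (ρ : ∀ n, Representation ℚ (Wgroup n) (M n))
    (φ : ∀ n, M n →ₗ[ℚ] M (n + 1)) : Prop :=
  ∀ n (g : Wgroup n) (v : M n), φ n (ρ n g v) = ρ (n + 1) (inclW n g) (φ n v)

/-- Condition II (surjectivity) for `W_n`-sequences. -/
def WnSurjSpan (ρ : ∀ n, Representation ℚ (Wgroup n) (M n))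
    (φ : ∀ n, M n →ₗ[ℚ] M (n + 1)) (n : ℕ) : Prop :=
  Submodule.span ℚ {x : M (n + 1) | ∃ (g : Wgroup (n + 1)) (v : M n),
    x = ρ (n + 1) g (φ n v)} = ⊤

/-- Uniform multiplicity stability for `W_n`-sequences. -/
def WnUnifMultStable (S : WnIrrSystem)
    (ρ : ∀ n, Representation ℚ (Wgroup n) (M n)) : Prop :=
  ∃ N, (∀ lam : DoublePartition, lam.minN ≤ N → ∀ n, N ≤ n →
      S.mult lam (ρ n) = S.mult lam (ρ N)) ∧
    (∀ lam : DoublePartition, N < lam.minN → ∀ n, lam.minN ≤ n → S.mult lam (ρ n) = 0)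

/-- Uniform representation stability for `W_n`-sequences. -/
def WnUnifRepStable (S : WnIrrSystem)
    (ρ : ∀ n, Representation ℚ (Wgroup n) (M n))
    (φ : ∀ n, M n →ₗ[ℚ] M (n + 1)) : Prop :=
  (∃ N, ∀ n, N ≤ n → Function.Injective (φ n) ∧ WnSurjSpan ρ φ n) ∧ WnUnifMultStable S ρ

end WnStability

open MvPolynomial in
/-- The algebra map `ℚ[x_1,…,x_{n+1}] → ℚ[x_1,…,x_n]` sending `x_j ↦ x_j` for `j ≤ n` and
`x_{n+1} ↦ 0`; it corresponds to the restriction map in cohomology induced by the inclusion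
of flag varieties `F_n ↪ F_{n+1}`. -/
noncomputable def setLastToZero (n : ℕ) :
    MvPolynomial (Fin (n + 1)) ℚ →ₐ[ℚ] MvPolynomial (Fin n) ℚ :=
  aeval (fun j : Fin (n + 1) => if h : (j : ℕ) < n then X (⟨(j : ℕ), h⟩ : Fin n) else 0)


open MvPolynomial

/-- The substitution rule for the action of `w = (ε, σ) ∈ W_n` on polynomials:
`x_i ↦ ε_{σ(i)} x_{σ(i)}`. -/
noncomputable def wVars (n : ℕ) (w : Wgroup n) : Fin n → MvPolynomial (Fin n) ℚ :=
  fun i => C (((w.left ((w.right : Equiv.Perm (Fin n)) i) : ℤ) : ℚ)) *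
    X ((w.right : Equiv.Perm (Fin n)) i)

/-- The action of the hyperoctahedral group `W_n` on `ℚ[x_1,…,x_n]`, permuting and negating
the variables. -/
noncomputable def wPolyRep (n : ℕ) :
    Representation ℚ (Wgroup n) (MvPolynomial (Fin n) ℚ) where
  toFun w := (aeval (wVars n w) : MvPolynomial (Fin n) ℚ →ₐ[ℚ] _).toLinearMap
  map_one' := by
    apply LinearMap.ext
    intro p
    have h : wVars n 1 = X := by
      funext i
      simp [wVars]
    simp [h, aeval_X_left]
  map_mul' w₁ w₂ := by
    apply LinearMap.ext
    intro p
    have h : (aeval (wVars n w₁)).comp (aeval (wVars n w₂)) = aeval (wVars n (w₁ * w₂)) := by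
      apply MvPolynomial.algHom_ext
      intro i
      simp only [AlgHom.comp_apply, wVars, map_mul, aeval_X, aeval_C,
        SemidirectProduct.mul_left, SemidirectProduct.mul_right, permMulAut,
        MonoidHom.coe_mk, OneHom.coe_mk, MulEquiv.coe_mk, Equiv.coe_fn_mk,
        Equiv.Perm.coe_mul, Function.comp_apply, Pi.mul_apply, Equiv.Perm.inv_def, Equiv.symm_apply_apply,
        Units.val_mul, Int.cast_mul, map_mul, algebraMap_eq]
      ring
    have := congrArg (fun (F : MvPolynomial (Fin n) ℚ →ₐ[ℚ] MvPolynomial (Fin n) ℚ) => F p) h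
    simpa using this.symm

/-- The ideal of `ℚ[x_1,…,x_n]` generated by the `W_n`-invariant polynomials with zero
constant term. -/
noncomputable def wSymIdeal (n : ℕ) : Ideal (MvPolynomial (Fin n) ℚ) :=
  Ideal.span {p | (∀ w : Wgroup n, wPolyRep n w p = p) ∧ constantCoeff p = 0}

/-- The coinvariant algebra of the Weyl group `W_n` (of type `B_n/C_n`), as a `ℚ`-module.
By Borel's theorem it computes `H^*(F′_n;ℚ)`, the cohomology of the Lagrangian flag
variety `F′_n = Sp_{2n}(ℂ)/B`. -/
noncomputable abbrev WCoinv (n : ℕ) : Type :=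
  MvPolynomial (Fin n) ℚ ⧸ ((wSymIdeal n).restrictScalars ℚ)

/-- The degree-`i` graded piece of the `W_n`-coinvariant algebra, i.e. (by Borel's theorem)
`H^i(F′_n;ℚ)` for `2i`... (the grading is the polynomial grading). -/
noncomputable def wCoinvGrade (n i : ℕ) : Submodule ℚ (WCoinv n) :=
  Submodule.map ((wSymIdeal n).restrictScalars ℚ).mkQ (homogeneousSubmodule (Fin n) ℚ i)

/-!
Write `A_n = ℚ[x_1, …, x_n]`, and let `V_n` be the irreducible representation `V(λ)_n`.

*Multiplicities.* By Maschke's theorem an equivariant map from `V_n` to the degree-`i` coinvariants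
lifts to an equivariant map `V_n → A_n`. A nonzero equivariant map `f : V_n → A_n` of degree `i`
has a nonzero coefficient functional, and averaging over its stabilizer yields a vector `v ≠ 0` of
`V_n` fixed by the pointwise stabilizer of some `i` variables. An equivariant `g` is determined by
`g v`, hence by the restriction of `g v` to `2 i` variables, so the multiplicities are bounded. It
remains to see that for large `n` every `g : V_n → A_n` of degree `i` is the restriction, along the
inclusion `V_n → V_{n+1}` and the specialisation `x_{n+1} ↦ 0`, of some `V_{n+1} → A_{n+1}`: this
survives the passage to coinvariants and makes the multiplicities monotone.

The equivariant maps split according to the number `k` of variables in each monomial. As long as no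
nonzero map involves fewer variables, restriction is injective on level `k`, because the coefficient
of a positive power of `x_{n+1}` involves only `k - 1` variables and so vanishes. The dimensions
then decrease, hence stabilize, and restriction is bijective. Otherwise let `Tₐ` replace an
exponent `a` by `0` in all possible ways. On maps of level `k` the joint kernel of the `Tₐ` with
`a ≠ 0` even is trivial, as some `v ≠ 0` is fixed by the signs and permutations of all but fewer
than `k` variables. The operator `∑ Tₐᵀ Tₐ` is thus injective, hence surjective, and as `Tₐ` lowers
the level while `Tₐᵀ` commutes with `x_{n+1} ↦ 0`, level `k` lifts because level `k - 1` does.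

*Surjectivity and spanning.* Substituting `x_j, z x_j, …, z ^ (M - 1) x_j`, with `z` a primitive
`M`-th root of unity, for disjoint cycles of variables turns symmetric polynomials into polynomials
in the `x_j ^ M`. Hence for `i < M` no nonzero degree-`i` polynomial in one variable from each
cycle lies in the coinvariant ideal. With at least `i` cycles, the permutations of such polynomials
span degree `i`.
-/

open Filter Module

section EventuallyConst

theorem eventuallyConst_of_eventually_succ_le {α : Type*} [PartialOrder α] [WellFoundedLT α]
    {a : ℕ → α} (h : ∀ᶠ n in atTop, a (n + 1) ≤ a n) : EventuallyConst a atTop := by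
  obtain ⟨N, hN⟩ := eventually_atTop.1 h
  have anti : Antitone fun n ↦ a (N + n) := antitone_nat_of_succ_le fun n ↦ hN _ (by lia)
  obtain ⟨m, hm⟩ := WellFoundedLT.antitone_chain_condition anti
  refine eventuallyConst_atTop.2 ⟨N + m, fun n hn ↦ ?_⟩
  obtain ⟨j, rfl⟩ := Nat.exists_eq_add_of_le hn
  simpa [add_assoc] using (hm (m + j) (by lia)).symm

theorem eventuallyConst_of_eventually_le_succ_of_le {a : ℕ → ℕ} {B : ℕ}
    (h : ∀ᶠ n in atTop, a n ≤ a (n + 1)) (hB : ∀ᶠ n in atTop, a n ≤ B) :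
    EventuallyConst a atTop := by
  have const : EventuallyConst (fun n ↦ B - a n) atTop :=
    eventuallyConst_of_eventually_succ_le (h.mono fun n hn ↦ Nat.sub_le_sub_left hn B)
  refine (const.comp (B - ·)).congr (hB.mono fun n hn ↦ ?_)
  simp only [Function.comp_apply]
  lia

theorem eventually_or_eventually_not_of_succ {P : ℕ → Prop}
    (h : ∀ᶠ n in atTop, P n → P (n + 1)) : (∀ᶠ n in atTop, P n) ∨ ∀ᶠ n in atTop, ¬ P n := by
  refine or_iff_not_imp_right.2 fun hP ↦ ?_
  obtain ⟨N, hN⟩ := eventually_atTop.1 h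
  obtain ⟨m, hm, hPm⟩ := frequently_atTop.1 (not_eventually.1 hP) N
  exact eventually_atTop.2 ⟨m, fun n hn ↦ Nat.le_induction (not_not.1 hPm)
    (fun j hj ↦ hN j (hm.trans hj)) n hn⟩

theorem exists_ge_forall_eq_of_eventuallyConst {α : Type*} {f : ℕ → α} (h : EventuallyConst f atTop)
    (m : ℕ) : ∃ N, m ≤ N ∧ ∀ n, N ≤ n → f n = f N := by
  obtain ⟨N, hN⟩ := eventuallyConst_atTop.1 h
  exact ⟨max m N, le_max_left m N, fun n hn ↦
    (hN n ((le_max_right m N).trans hn)).trans (hN _ (le_max_right m N)).symm⟩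

end EventuallyConst

section Submodule

theorem finrank_map_of_disjoint_ker {k V W : Type*} [Ring k] [AddCommGroup V] [Module k V]
    [AddCommGroup W] [Module k W] {f : V →ₗ[k] W} {P : Submodule k V}
    (h : Disjoint P (LinearMap.ker f)) : finrank k (P.map f) = finrank k P :=
  (LinearEquiv.ofBijective (f.submoduleMap P)
    ⟨LinearMap.submoduleMap_injective_of_injOn (LinearMap.disjoint_ker_iff_injOn.1 h),
      f.submoduleMap_surjective P⟩).finrank_eq.symm

theorem map_eq_of_disjoint_ker {k V : Type*} [Field k] [AddCommGroup V] [Module k V]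
    {f : Module.End k V} {P : Submodule k V} [Module.Finite k P] (hP : P ≤ P.comap f)
    (h : Disjoint P (LinearMap.ker f)) : P.map f = P :=
  Submodule.eq_of_le_of_finrank_eq (Submodule.map_le_iff_le_comap.2 hP)
    (finrank_map_of_disjoint_ker h)

theorem exists_le_injective_comp_subtype_range_eq_top {k V W : Type*} [Field k] [AddCommGroup V]
    [Module k V] [AddCommGroup W] [Module k W] {f : V →ₗ[k] W} (hf : Function.Surjective f)
    {U : Submodule k V} (hU : Disjoint U (LinearMap.ker f)) :
    ∃ T, U ≤ T ∧ Function.Injective (f ∘ₗ T.subtype) ∧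
      LinearMap.range (f ∘ₗ T.subtype) = ⊤ := by
  obtain ⟨T, hUT, hT⟩ := hU.exists_isCompl
  exact ⟨T, hUT, LinearMap.injective_domRestrict_iff.2 hT.disjoint,
    LinearMap.range_eq_top.2 ((LinearMap.surjective_domRestrict_iff hf).2 hT.codisjoint)⟩

variable {k : Type*} [Field k] {M : ℕ → Type*} [∀ n, AddCommGroup (M n)] [∀ n, Module k (M n)]
  {E : ∀ n, Submodule k (M n)} {s : ∀ n, M (n + 1) →ₗ[k] M n}

theorem eventually_le_map_of_eventually_disjoint_ker
    (hfin : ∀ᶠ n in atTop, Module.Finite k (E n))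
    (hs : ∀ᶠ n in atTop, E (n + 1) ≤ (E n).comap (s n))
    (hker : ∀ᶠ n in atTop, Disjoint (E (n + 1)) (LinearMap.ker (s n))) :
    ∀ᶠ n in atTop, E n ≤ (E (n + 1)).map (s n) := by
  have finrank_map : ∀ᶠ n in atTop, finrank k ((E (n + 1)).map (s n)) = finrank k (E (n + 1)) :=
    hker.mono fun n hn ↦ finrank_map_of_disjoint_ker hn
  have const : EventuallyConst (fun n ↦ finrank k (E n)) atTop := by
    refine eventuallyConst_of_eventually_succ_le ?_
    filter_upwards [hfin, hs, finrank_map] with n _ hs hrank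
    exact hrank ▸ Submodule.finrank_mono (Submodule.map_le_iff_le_comap.2 hs)
  obtain ⟨N, hN⟩ := eventuallyConst_atTop.1 const
  filter_upwards [hfin, hs, finrank_map, eventually_ge_atTop N] with n _ hs hrank hn
  refine (Submodule.eq_of_le_of_finrank_eq (Submodule.map_le_iff_le_comap.2 hs) ?_).ge
  rw [hrank, hN n hn, hN (n + 1) (by lia)]

theorem eventuallyConst_finrank_of_eventually_le_map {B : ℕ}
    (hfin : ∀ᶠ n in atTop, Module.Finite k (E n))
    (hs : ∀ᶠ n in atTop, E n ≤ (E (n + 1)).map (s n))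
    (hB : ∀ᶠ n in atTop, finrank k (E n) ≤ B) :
    EventuallyConst (fun n ↦ finrank k (E n)) atTop := by
  refine eventuallyConst_of_eventually_le_succ_of_le ?_ hB
  filter_upwards [(tendsto_add_atTop_nat 1).eventually hfin, hs] with n _ hs
  exact (Submodule.finrank_mono hs).trans (Submodule.finrank_map_le (s n) (E (n + 1)))

end Submodule

section RepHomInto

variable {k G H V V' W U : Type*}

/-- The space of equivariant linear maps `V → W` with values in a given subspace `P` of `W`. -/
def repHomInto [CommSemiring k] [Monoid G] [AddCommMonoid V] [Module k V] [AddCommMonoid W]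
    [Module k W] (ρ : Representation k G V) (σ : Representation k G W) (P : Submodule k W) :
    Submodule k (V →ₗ[k] W) :=
  RepHom ρ σ ⊓ Submodule.compatibleMaps ⊤ P

section Semiring

variable [CommSemiring k] [Monoid G] [Monoid H] [AddCommMonoid V] [Module k V] [AddCommMonoid V']
  [Module k V'] [AddCommMonoid W] [Module k W] [AddCommMonoid U] [Module k U]
  {ρ : Representation k G V} {σ : Representation k G W} {τ : Representation k G U}
  {P P' : Submodule k W} {Q : Submodule k U} {f : V →ₗ[k] W}

theorem mem_repHomInto :
    f ∈ repHomInto ρ σ P ↔ (∀ g v, f (ρ g v) = σ g (f v)) ∧ ∀ v, f v ∈ P := by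
  simp [repHomInto, RepHom, Submodule.compatibleMaps, SetLike.le_def]

theorem repHomInto_mono (h : P ≤ P') : repHomInto ρ σ P ≤ repHomInto ρ σ P' := fun _ hf ↦
  mem_repHomInto.2 ⟨(mem_repHomInto.1 hf).1, fun v ↦ h ((mem_repHomInto.1 hf).2 v)⟩

theorem comp_mem_repHomInto {π : W →ₗ[k] U} (hf : f ∈ repHomInto ρ σ P) (hπ : π ∈ RepHom σ τ)
    (hPQ : P ≤ Q.comap π) : π ∘ₗ f ∈ repHomInto ρ τ Q := by
  obtain ⟨hf, hfP⟩ := mem_repHomInto.1 hf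
  exact mem_repHomInto.2 ⟨fun g v ↦ by simp [hf, hπ g], fun v ↦ hPQ (hfP v)⟩

/-- The map `Hom(V, W) → Hom(V', U)`, `f ↦ π ∘ f ∘ ι`. -/
def homMap (ι : V' →ₗ[k] V) (π : W →ₗ[k] U) : (V →ₗ[k] W) →ₗ[k] V' →ₗ[k] U :=
  π.compRight k ∘ₗ ι.lcomp k W

@[simp]
theorem homMap_apply (ι : V' →ₗ[k] V) (π : W →ₗ[k] U) (f : V →ₗ[k] W) (v : V') :
    homMap ι π f v = π (f (ι v)) :=
  rfl

theorem homMap_mem_repHomInto {φ : H →* G} {ρ' : Representation k H V'}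
    {τ' : Representation k H U} {ι : V' →ₗ[k] V} {π : W →ₗ[k] U}
    (hι : ι ∈ RepHom ρ' (ρ.comp φ)) (hπ : π ∈ RepHom (σ.comp φ) τ') (hPQ : P ≤ Q.comap π)
    (hf : f ∈ repHomInto ρ σ P) : homMap ι π f ∈ repHomInto ρ' τ' Q := by
  obtain ⟨hf, hfP⟩ := mem_repHomInto.1 hf
  refine mem_repHomInto.2 ⟨fun g v ↦ ?_, fun v ↦ hPQ (hfP _)⟩
  have hιg : ι (ρ' g v) = ρ (φ g) (ι v) := hι g v
  have hπg : π (σ (φ g) (f (ι v))) = τ' g (π (f (ι v))) := hπ g _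
  simp [hιg, hf, hπg]

theorem finrank_repHom_eq_finrank_repHomInto {σ' : Representation k G P}
    (h : ∀ g x, (σ' g x : W) = σ g x) :
    finrank k (RepHom ρ σ') = finrank k (repHomInto ρ σ P) := by
  have inj : Function.Injective (P.subtype.compRight k (M := V)) := fun f g hfg ↦
    LinearMap.ext fun v ↦ Subtype.ext (LinearMap.congr_fun hfg v)
  have map_eq : (RepHom ρ σ').map (P.subtype.compRight k) = repHomInto ρ σ P := by
    ext f
    rw [mem_repHomInto, Submodule.mem_map]
    refine ⟨?_, fun ⟨hf, hfP⟩ ↦ ⟨f.codRestrict P hfP, fun g v ↦ Subtype.ext ?_, rfl⟩⟩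
    · rintro ⟨f, hf, rfl⟩
      exact ⟨fun g v ↦ by simp [hf g v, h], fun v ↦ (f v).2⟩
    · simp [hf, h]
  rw [← map_eq, (Submodule.equivMapOfInjective _ inj _).finrank_eq]

end Semiring

/-- **Maschke's theorem**, in the form that equivariant maps lift along an equivariant map. -/
theorem map_compRight_repHomInto [Field k] [CharZero k] [Group G] [Finite G] [AddCommGroup V]
    [Module k V] [AddCommGroup W] [Module k W] [AddCommGroup U] [Module k U]
    {ρ : Representation k G V} {σ : Representation k G W} {τ : Representation k G U}
    {P : Submodule k W} {π : W →ₗ[k] U} (hπ : π ∈ RepHom σ τ) (hP : ∀ g, P ≤ P.comap (σ g)) :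
    (repHomInto ρ σ P).map (π.compRight k) = repHomInto ρ τ (P.map π) := by
  refine le_antisymm (Submodule.map_le_iff_le_comap.2 fun f hf ↦
    comp_mem_repHomInto hf hπ (Submodule.le_comap_map π P)) fun f hf ↦ ?_
  obtain ⟨hf, hfP⟩ := mem_repHomInto.1 hf
  have := Fintype.ofFinite G
  obtain ⟨s, hs⟩ := (π.submoduleMap P).exists_rightInverse_of_surjective
    (LinearMap.range_eq_top.2 (π.submoduleMap_surjective P))
  let lift : V →ₗ[k] W := P.subtype ∘ₗ s ∘ₗ f.codRestrict _ hfP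
  have π_lift (v : V) : π (lift v) = f v :=
    congrArg Subtype.val (LinearMap.congr_fun hs ⟨f v, hfP v⟩)
  have card_ne : (Fintype.card G : k) ≠ 0 := Nat.cast_ne_zero.2 Fintype.card_ne_zero
  refine ⟨(Fintype.card G : k)⁻¹ • ∑ g, σ g ∘ₗ lift ∘ₗ ρ g⁻¹,
    mem_repHomInto.2 ⟨fun h v ↦ ?_, fun v ↦ ?_⟩, LinearMap.ext fun v ↦ ?_⟩
  · simp only [LinearMap.smul_apply, LinearMap.sum_apply, map_smul, map_sum]
    congr 1
    refine Fintype.sum_equiv (Equiv.mulLeft h⁻¹) _ _ fun g ↦ ?_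
    simp [← Module.End.mul_apply, ← map_mul, ← mul_assoc]
  · simp only [LinearMap.smul_apply, LinearMap.sum_apply]
    exact P.smul_mem _ (P.sum_mem fun g _ ↦ hP g (s (f.codRestrict _ hfP _)).2)
  · have term (g : G) : π (σ g (lift (ρ g⁻¹ v))) = f v := by
      rw [hπ g, π_lift, hf, ← Module.End.mul_apply, ← map_mul, mul_inv_cancel, map_one,
        Module.End.one_apply]
    simp [term, ← Nat.cast_smul_eq_nsmul k, smul_smul, card_ne]

end RepHomInto

section Irreducible

variable {k G V W U : Type*} [Field k] [Group G] [AddCommGroup V] [Module k V] [AddCommGroup W]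
  [Module k W] [AddCommGroup U] [Module k U] {ρ : Representation k G V}
  {σ : Representation k G W} {P : Submodule k W}

theorem IsIrreducibleRep.eq_zero_of_apply_eq_zero (hρ : IsIrreducibleRep ρ) {f : V →ₗ[k] W}
    (hf : f ∈ RepHom ρ σ) {v : V} (hv : v ≠ 0) (hfv : f v = 0) : f = 0 := by
  have ker_inv (g : G) (v : V) (hv : v ∈ LinearMap.ker f) : ρ g v ∈ LinearMap.ker f := by
    rw [LinearMap.mem_ker] at hv ⊢
    rw [hf, hv, map_zero]
  refine LinearMap.ker_eq_top.1 ((hρ.2 _ ker_inv).resolve_left fun h ↦ hv ?_)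
  rwa [← LinearMap.mem_ker, h, Submodule.mem_bot] at hfv

theorem IsIrreducibleRep.exists_injective_repHomInto (hρ : IsIrreducibleRep ρ) {v : V}
    (hv : v ≠ 0) {π : W →ₗ[k] U} {Q : Submodule k U}
    (hQ : ∀ f ∈ repHomInto ρ σ P, π (f v) ∈ Q)
    (hπ : ∀ f ∈ repHomInto ρ σ P, π (f v) = 0 → f v = 0) :
    ∃ e : repHomInto ρ σ P →ₗ[k] Q, Function.Injective e := by
  refine ⟨(π ∘ₗ LinearMap.applyₗ v).restrict hQ,
    (injective_iff_map_eq_zero _).2 fun f hfv ↦ Subtype.ext ?_⟩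
  exact hρ.eq_zero_of_apply_eq_zero f.2.1 hv (hπ f f.2 (congrArg Subtype.val hfv))

theorem IsIrreducibleRep.finite_repHomInto [Module.Finite k P] (hρ : IsIrreducibleRep ρ) :
    Module.Finite k (repHomInto ρ σ P) := by
  obtain ⟨v, hv⟩ := hρ.1
  obtain ⟨e, he⟩ := hρ.exists_injective_repHomInto (σ := σ) hv (π := .id)
    (fun f hf ↦ (mem_repHomInto.1 hf).2 v) fun _ _ ↦ id
  exact Module.Finite.of_injective e he

theorem exists_apply_ne_zero_forall_fixed [CharZero k] [Finite G] (ρ : Representation k G V)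
    {l : V →ₗ[k] k} (hl : l ≠ 0) :
    ∃ v, l v ≠ 0 ∧ ∀ g, l ∘ₗ ρ g = l → ρ g v = v := by
  let H : Subgroup G :=
    { carrier := {g | l ∘ₗ ρ g = l}
      one_mem' := by simp [Module.End.one_eq_id]
      mul_mem' := fun {g h} hg hh ↦ by
        simpa [Module.End.mul_eq_comp, ← LinearMap.comp_assoc, hg.out] using hh
      inv_mem' := fun {g} hg ↦ by
        nth_rw 1 [Set.mem_ofPred_eq, ← hg.out, LinearMap.comp_assoc, ← Module.End.mul_eq_comp,
          ← map_mul, mul_inv_cancel, map_one, Module.End.one_eq_id, LinearMap.comp_id] }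
  have := Fintype.ofFinite H
  obtain ⟨v, hv⟩ : ∃ v, l v ≠ 0 := by
    by_contra! h
    exact hl (LinearMap.ext h)
  refine ⟨∑ g : H, ρ g v, ?_, fun g hg ↦ ?_⟩
  · have term (g : H) : l (ρ g v) = l v := LinearMap.congr_fun g.2 v
    simp [term, hv]
  · rw [map_sum]
    refine Fintype.sum_equiv (Equiv.mulLeft (⟨g, hg⟩ : H)) _ _ fun h ↦ ?_
    simp

end Irreducible

section ExactVars

variable {σ R : Type*} [CommSemiring R]

theorem degree_update_add (d : σ →₀ ℕ) (l : σ) (a : ℕ) :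
    (d.update l a).degree + d l = d.degree + a :=
  d.sum_update_add l a (fun _ b ↦ b) (fun _ ↦ rfl) fun _ _ _ ↦ rfl

theorem card_support_le_degree (d : σ →₀ ℕ) : d.support.card ≤ d.degree := by
  rw [Finsupp.degree_apply, Finset.card_eq_sum_ones]
  exact Finset.sum_le_sum fun l hl ↦ Nat.one_le_iff_ne_zero.2 (Finsupp.mem_support_iff.1 hl)

theorem mem_restrictSupport_iff_coeff {s : Set (σ →₀ ℕ)} {p : MvPolynomial σ R} :
    p ∈ restrictSupport R s ↔ ∀ d, coeff d p ≠ 0 → d ∈ s := by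
  simp [mem_restrictSupport_iff, Set.subset_def]

theorem mem_homogeneousSubmodule_iff_coeff {i : ℕ} {p : MvPolynomial σ R} :
    p ∈ homogeneousSubmodule σ R i ↔ ∀ d, coeff d p ≠ 0 → d.degree = i := by
  rw [Finsupp.degree_eq_weight_one]
  rfl

variable (σ R) in
/-- The polynomials all of whose monomials have degree `i` and involve exactly `k` variables. -/
noncomputable def exactVars (k i : ℕ) : Submodule R (MvPolynomial σ R) :=
  restrictSupport R {d | d.degree = i ∧ d.support.card = k}

theorem mem_exactVars {k i : ℕ} {p : MvPolynomial σ R} :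
    p ∈ exactVars σ R k i ↔ ∀ d, coeff d p ≠ 0 → d.degree = i ∧ d.support.card = k :=
  mem_restrictSupport_iff_coeff

theorem exactVars_le_homogeneousSubmodule (k i : ℕ) :
    exactVars σ R k i ≤ homogeneousSubmodule σ R i := fun _ hp ↦
  mem_homogeneousSubmodule_iff_coeff.2 fun d hd ↦ (mem_exactVars.1 hp d hd).1

instance finite_homogeneousSubmodule [Finite σ] (i : ℕ) :
    Module.Finite R (homogeneousSubmodule σ R i) :=
  Module.Finite.iff_fg.2 (homogeneousSubmodule_fg σ R i)

instance finite_exactVars {K : Type*} [Field K] [Finite σ] (k i : ℕ) :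
    Module.Finite K (exactVars σ K k i) :=
  Submodule.finiteDimensional_of_le (exactVars_le_homogeneousSubmodule k i)

open scoped Classical in
/-- The part of a polynomial formed by the monomials in exactly `k` variables. -/
noncomputable def exactVarsComponent (k : ℕ) : MvPolynomial σ R →ₗ[R] MvPolynomial σ R :=
  (basisMonomials σ R).constr R fun d ↦ if d.support.card = k then monomial d 1 else 0

theorem coeff_exactVarsComponent (k : ℕ) (p : MvPolynomial σ R) (d : σ →₀ ℕ) :
    coeff d (exactVarsComponent k p) = if d.support.card = k then coeff d p else 0 := by
  classical
  suffices lcoeff R d ∘ₗ exactVarsComponent k =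
      (if d.support.card = k then 1 else 0 : R) • lcoeff R d by
    simpa only [LinearMap.comp_apply, lcoeff_apply, LinearMap.smul_apply, smul_eq_mul, ite_mul,
      one_mul, zero_mul] using LinearMap.congr_fun this p
  refine (basisMonomials σ R).ext fun e ↦ ?_
  rw [LinearMap.comp_apply, exactVarsComponent, Basis.constr_basis, coe_basisMonomials]
  by_cases hde : e = d
  · subst hde
    split_ifs <;> simp
  · split_ifs <;> simp [coeff_monomial, hde]

theorem exactVarsComponent_mem_exactVars (k : ℕ) {i : ℕ} {p : MvPolynomial σ R}
    (hp : p ∈ homogeneousSubmodule σ R i) : exactVarsComponent k p ∈ exactVars σ R k i := by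
  refine mem_exactVars.2 fun d hd ↦ ?_
  rw [coeff_exactVarsComponent] at hd
  obtain ⟨hk, hd⟩ := ite_ne_right_iff.1 hd
  exact ⟨mem_homogeneousSubmodule_iff_coeff.1 hp d hd, hk⟩

theorem sum_exactVarsComponent {i : ℕ} {p : MvPolynomial σ R}
    (hp : p ∈ homogeneousSubmodule σ R i) :
    ∑ k ∈ Finset.range (i + 1), exactVarsComponent k p = p := by
  ext d
  simp only [coeff_sum, coeff_exactVarsComponent, Finset.sum_ite_eq, Finset.mem_range,
    ite_eq_left_iff, not_lt]
  intro hi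
  by_contra h
  have := card_support_le_degree d
  rw [mem_homogeneousSubmodule_iff_coeff.1 hp d (Ne.symm h)] at this
  lia

theorem toDual_self [DecidableEq σ] (p : MvPolynomial σ R) :
    (basisMonomials σ R).toDual p p = ∑ d ∈ p.support, coeff d p ^ 2 :=
  calc (basisMonomials σ R).toDual p p
    _ = (basisMonomials σ R).toDual (∑ d ∈ p.support, coeff d p • basisMonomials σ R d) p := by
      congr 1
      nth_rw 1 [p.as_sum]
      simp [smul_monomial]
    _ = _ := by
      rw [map_sum, LinearMap.sum_apply]
      refine Finset.sum_congr rfl fun d _ ↦ ?_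
      rw [map_smul, LinearMap.smul_apply, Basis.toDual_apply_right, sq]
      rfl

end ExactVars

section ReplaceExp

variable {σ R : Type*} [Fintype σ]

section Semiring

variable [CommSemiring R]

open scoped Classical in
/-- The operator sending a monomial to the sum of all monomials obtained from it by replacing
one of its exponents equal to `a` by `b`. An absent variable counts as an exponent `0`. -/
noncomputable def replaceExp (a b : ℕ) : MvPolynomial σ R →ₗ[R] MvPolynomial σ R :=
  (basisMonomials σ R).constr R fun d ↦
    ∑ l, if d l = a then monomial (d.update l b) 1 else 0

theorem coeff_replaceExp (a b : ℕ) (p : MvPolynomial σ R) (e : σ →₀ ℕ) :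
    coeff e (replaceExp a b p) = ∑ l, if e l = b then coeff (e.update l a) p else 0 := by
  classical
  suffices lcoeff R e ∘ₗ replaceExp a b =
      ∑ l, (if e l = b then 1 else 0 : R) • lcoeff R (e.update l a) by
    simpa only [LinearMap.comp_apply, LinearMap.sum_apply, lcoeff_apply, LinearMap.smul_apply,
      smul_eq_mul, ite_mul, one_mul, zero_mul] using LinearMap.congr_fun this p
  refine (basisMonomials σ R).ext fun d ↦ ?_
  rw [LinearMap.comp_apply, replaceExp, Basis.constr_basis, coe_basisMonomials, map_sum,
    LinearMap.sum_apply]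
  refine Finset.sum_congr rfl fun l _ ↦ ?_
  have update_iff : d l = a ∧ d.update l b = e ↔ e l = b ∧ d = e.update l a := by
    simp only [Finsupp.ext_iff, Finsupp.update_apply]
    grind
  simp only [apply_ite (lcoeff R e), lcoeff_apply, coeff_monomial, map_zero, LinearMap.smul_apply,
    smul_eq_mul, ite_mul, one_mul, zero_mul, ← ite_and, update_iff]

theorem toDual_replaceExp [DecidableEq σ] (a b : ℕ) (p q : MvPolynomial σ R) :
    (basisMonomials σ R).toDual (replaceExp a b p) q =
      (basisMonomials σ R).toDual p (replaceExp b a q) := by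
  suffices (basisMonomials σ R).toDual ∘ₗ replaceExp a b =
      (basisMonomials σ R).toDual.compl₂ (replaceExp b a) from
    LinearMap.congr_fun₂ this p q
  refine (basisMonomials σ R).ext fun d ↦ (basisMonomials σ R).ext fun e ↦ ?_
  rw [LinearMap.comp_apply, Basis.toDual_apply_left, LinearMap.compl₂_apply,
    Basis.toDual_apply_right, coe_basisMonomials]
  change coeff e (replaceExp a b (monomial d 1)) = coeff d (replaceExp b a (monomial e 1))
  classical
  rw [coeff_replaceExp, coeff_replaceExp]
  refine Finset.sum_congr rfl fun l _ ↦ ?_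
  have update_iff : e l = b ∧ d = e.update l a ↔ d l = a ∧ e = d.update l b := by
    simp only [Finsupp.ext_iff, Finsupp.update_apply]
    grind
  simp only [coeff_monomial, ← ite_and, update_iff]

theorem replaceExp_mem_exactVars_of_lower {a k i : ℕ} (ha : a ≠ 0) {p : MvPolynomial σ R}
    (hp : p ∈ exactVars σ R (k + 1) i) : replaceExp a 0 p ∈ exactVars σ R k (i - a) := by
  classical
  refine mem_exactVars.2 fun d hd ↦ ?_
  rw [coeff_replaceExp] at hd
  obtain ⟨l, -, hl⟩ := Finset.exists_ne_zero_of_sum_ne_zero hd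
  obtain ⟨hdl, hl⟩ := ite_ne_right_iff.1 hl
  obtain ⟨hdeg, hcard⟩ := mem_exactVars.1 hp _ hl
  have := degree_update_add d l a
  rw [Finsupp.support_update_ne_zero _ _ ha,
    Finset.card_insert_of_notMem (Finsupp.notMem_support_iff.2 hdl)] at hcard
  lia

theorem replaceExp_mem_exactVars_of_raise {a k i : ℕ} (ha : a ≠ 0) (hai : a ≤ i)
    {p : MvPolynomial σ R} (hp : p ∈ exactVars σ R k (i - a)) :
    replaceExp 0 a p ∈ exactVars σ R (k + 1) i := by
  classical
  refine mem_exactVars.2 fun d hd ↦ ?_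
  rw [coeff_replaceExp] at hd
  obtain ⟨l, -, hl⟩ := Finset.exists_ne_zero_of_sum_ne_zero hd
  obtain ⟨hdl, hl⟩ := ite_ne_right_iff.1 hl
  obtain ⟨hdeg, hcard⟩ := mem_exactVars.1 hp _ hl
  have := degree_update_add d l 0
  have hmem : l ∈ d.support := Finsupp.mem_support_iff.2 (hdl ▸ ha)
  rw [Finsupp.support_update_zero, Finset.card_erase_of_mem hmem] at hcard
  have := Finset.card_pos.2 ⟨l, hmem⟩
  lia

end Semiring

theorem replaceExp_eq_zero_of_sum_eq_zero [Field R] [LinearOrder R] [IsStrictOrderedRing R]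
    {s : Finset ℕ} {p : MvPolynomial σ R}
    (h : ∑ a ∈ s, replaceExp 0 a (replaceExp a 0 p) = 0) : ∀ a ∈ s, replaceExp a 0 p = 0 := by
  classical
  have toDual_nonneg (q : MvPolynomial σ R) : 0 ≤ (basisMonomials σ R).toDual q q :=
    toDual_self q ▸ Finset.sum_nonneg fun _ _ ↦ sq_nonneg _
  have sum_eq :
      ∑ a ∈ s, (basisMonomials σ R).toDual (replaceExp a 0 p) (replaceExp a 0 p) = 0 := by
    simpa [toDual_replaceExp, ← map_sum] using
      congrArg ((basisMonomials σ R).toDual p) h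
  intro a ha
  have ha := (Finset.sum_eq_zero_iff_of_nonneg fun a _ ↦ toDual_nonneg _).1 sum_eq a ha
  rw [toDual_self, Finset.sum_eq_zero_iff_of_nonneg fun _ _ ↦ sq_nonneg _] at ha
  ext d
  by_contra hd
  exact hd (pow_eq_zero_iff two_ne_zero |>.1 (ha d (mem_support_iff.2 hd)))

theorem eq_zero_of_replaceExp_eq_zero [DecidableEq σ] [CommSemiring R] [CharZero R]
    [NoZeroDivisors R] {J : Finset σ} {p : MvPolynomial σ R}
    (hcard : ∀ d, coeff d p ≠ 0 → J.card < d.support.card)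
    (heven : ∀ d, coeff d p ≠ 0 → ∀ l ∉ J, Even (d l))
    (hswap : ∀ l ∉ J, ∀ l' ∉ J, ∀ d, coeff (d.equivMapDomain (swap l l')) p = coeff d p)
    (h : ∀ a, Even a → a ≠ 0 → replaceExp a 0 p = 0) : p = 0 := by
  suffices ∀ m, ∀ d, (d.support \ J).card = m → coeff d p = 0 from
    MvPolynomial.ext _ _ fun d ↦ this _ d rfl
  intro m
  induction m using Nat.strong_induction_on with | _ m ih
  rintro d rfl
  by_contra hd
  obtain ⟨l, hl, hlJ⟩ := Finset.exists_mem_notMem_of_card_lt_card (hcard d hd)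
  have hdl : d l ≠ 0 := Finsupp.mem_support_iff.1 hl
  let e := d.update l 0
  have term (l' : σ) : (if e l' = 0 then coeff (e.update l' (d l)) p else 0) =
      if e l' = 0 ∧ l' ∉ J then coeff d p else 0 := by
    by_cases he : e l' = 0 <;> by_cases hl' : l' ∈ J <;> simp only [he, hl', if_true, if_false,
      not_true, not_false_iff, and_true, and_false]
    · refine ih _ (Finset.card_lt_card ?_) _ rfl
      rw [Finsupp.support_update_ne_zero _ _ hdl, Finset.insert_sdiff_of_mem _ hl',
        Finsupp.support_update_zero, Finset.erase_sdiff_comm]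
      exact Finset.erase_ssubset (Finset.mem_sdiff.2 ⟨hl, hlJ⟩)
    · rw [← hswap l hlJ l' hl' d]
      congr 1
      ext j
      simp only [e, Finsupp.update_apply, Finsupp.equivMapDomain_apply, symm_swap] at he ⊢
      grind
  have count : ∃ N : ℕ, (N : R) * coeff d p = 0 ∧ N ≠ 0 := by
    refine ⟨(Finset.univ.filter fun l' ↦ e l' = 0 ∧ l' ∉ J).card, ?_, ?_⟩
    · have := congrArg (coeff e) (h (d l) (heven d hd l hlJ) hdl)
      rwa [coeff_replaceExp, Finset.sum_congr rfl fun l' _ ↦ term l', ← Finset.sum_filter,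
        Finset.sum_const, nsmul_eq_mul, coeff_zero] at this
    · exact Finset.card_ne_zero_of_mem (a := l) (by simp [e, Finsupp.update_apply, hlJ])
  obtain ⟨N, hN, hN0⟩ := count
  simp [hN0, hd] at hN

end ReplaceExp

section Coeff

variable {σ τ R : Type*} [CommSemiring R]

theorem coeff_aeval_C_mul_X (c : σ → R) (p : MvPolynomial σ R) (d : σ →₀ ℕ) :
    coeff d (aeval (fun j ↦ C (c j) * X j) p) = (d.prod fun j m ↦ c j ^ m) * coeff d p := by
  classical
  induction p using MvPolynomial.induction_on' with
  | monomial e r =>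
    rw [aeval_monomial]
    simp only [mul_pow, Finsupp.prod_mul, ← C_pow, ← map_finsuppProd, algebraMap_eq]
    rw [mul_left_comm, ← monomial_eq, coeff_C_mul, coeff_monomial]
    split_ifs with hed
    · rw [hed]
    · simp
  | add p q hp hq => simp only [map_add, coeff_add, hp, hq, mul_add]

theorem coeff_rename_equiv (e : σ ≃ τ) (p : MvPolynomial σ R) (d : τ →₀ ℕ) :
    coeff d (rename e p) = coeff (d.equivMapDomain e.symm) p := by
  rw [← coeff_rename_mapDomain e e.injective, ← Finsupp.equivMapDomain_eq_mapDomain,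
    ← Finsupp.equivMapDomain_trans, symm_trans_self, Finsupp.equivMapDomain_refl]

theorem degree_equivMapDomain {M : Type*} [AddCommMonoid M] (e : σ ≃ τ) (d : σ →₀ M) :
    (d.equivMapDomain e).degree = d.degree := by
  rw [Finsupp.equivMapDomain_eq_mapDomain, Finsupp.degree_mapDomain]

end Coeff

section WAction

variable {n : ℕ}

instance finite_Wgroup : Finite (Wgroup n) :=
  .of_equiv _ SemidirectProduct.equivProd.symm

/-- The scalar by which the sign vector `ε` multiplies a monomial with exponent `d`. -/
noncomputable def monomialSign (ε : Fin n → ℤˣ) (d : Fin n →₀ ℕ) : ℚ :=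
  ∏ j, ((ε j : ℤ) : ℚ) ^ d j

theorem monomialSign_update {a b : ℕ} (ha : Even a) (hb : Even b) (ε : Fin n → ℤˣ)
    {d : Fin n →₀ ℕ} {l : Fin n} (hd : d l = a) :
    monomialSign ε (d.update l b) = monomialSign ε d := by
  refine Finset.prod_congr rfl fun j _ ↦ ?_
  have sign_pow_even {m : ℕ} (hm : Even m) : ((ε l : ℤ) : ℚ) ^ m = 1 := by
    rw [← Int.cast_pow, ← Units.val_pow_eq_pow_val, Int.units_pow_eq_pow_mod_two,
      Nat.even_iff.1 hm, pow_zero, Units.val_one, Int.cast_one]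
  rcases eq_or_ne j l with rfl | hj
  · rw [Finsupp.update_apply, if_pos rfl, hd, sign_pow_even ha, sign_pow_even hb]
  · rw [Finsupp.update_apply, if_neg hj]

theorem wPolyRep_eq_aeval_rename (w : Wgroup n) (p : MvPolynomial (Fin n) ℚ) :
    wPolyRep n w p = aeval (fun j ↦ C ((w.left j : ℤ) : ℚ) * X j) (rename w.right p) := by
  rw [aeval_rename]
  rfl

theorem coeff_wPolyRep (w : Wgroup n) (p : MvPolynomial (Fin n) ℚ) (d : Fin n →₀ ℕ) :
    coeff d (wPolyRep n w p) =
      monomialSign w.left d * coeff (d.equivMapDomain w.right.symm) p := by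
  rw [wPolyRep_eq_aeval_rename, coeff_aeval_C_mul_X, coeff_rename_equiv,
    Finsupp.prod_fintype _ _ fun _ ↦ pow_zero _, monomialSign]

theorem wPolyRep_inr (σ : Perm (Fin n)) (p : MvPolynomial (Fin n) ℚ) :
    wPolyRep n (SemidirectProduct.inr σ) p = rename σ p := by
  ext d
  simp [coeff_wPolyRep, coeff_rename_equiv, monomialSign]

theorem coeff_equivMapDomain_ne_zero {w : Wgroup n} {p : MvPolynomial (Fin n) ℚ}
    {d : Fin n →₀ ℕ} (hd : coeff d (wPolyRep n w p) ≠ 0) :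
    coeff (d.equivMapDomain w.right.symm) p ≠ 0 :=
  right_ne_zero_of_mul (coeff_wPolyRep w p d ▸ hd)

theorem homogeneousSubmodule_le_comap_wPolyRep (i : ℕ) (w : Wgroup n) :
    homogeneousSubmodule (Fin n) ℚ i ≤
      (homogeneousSubmodule (Fin n) ℚ i).comap (wPolyRep n w) := fun p hp ↦ by
  rw [mem_homogeneousSubmodule_iff_coeff] at hp
  refine mem_homogeneousSubmodule_iff_coeff.2 fun d hd ↦ ?_
  rw [← hp _ (coeff_equivMapDomain_ne_zero hd), degree_equivMapDomain]

theorem exactVarsComponent_mem_repHom (k : ℕ) :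
    exactVarsComponent k ∈ RepHom (wPolyRep n) (wPolyRep n) := fun w p ↦ by
  ext d
  simp [coeff_exactVarsComponent, coeff_wPolyRep, Finsupp.equivMapDomain]

theorem replaceExp_mem_repHom {a b : ℕ} (ha : Even a) (hb : Even b) :
    replaceExp a b ∈ RepHom (wPolyRep n) (wPolyRep n) := fun w p ↦ by
  ext d
  simp only [coeff_replaceExp, coeff_wPolyRep, Finset.mul_sum]
  refine Finset.sum_equiv w.right.symm (by simp) fun l _ ↦ ?_
  have update_equivMapDomain : (d.update l a).equivMapDomain w.right.symm =
      (d.equivMapDomain w.right.symm).update (w.right.symm l) a := by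
    classical
    ext j
    simp [Finsupp.update_apply, eq_symm_apply]
  rw [update_equivMapDomain, Finsupp.equivMapDomain_symm_apply, apply_symm_apply]
  split_ifs with hl
  · rw [monomialSign_update hb ha _ hl]
  · rw [mul_zero]

end WAction

section LastCoeff

variable {n : ℕ}

/-- The exponent `d` in the first `n` variables, extended by the exponent `b` in the last. -/
noncomputable def snocExp (d : Fin n →₀ ℕ) (b : ℕ) : Fin (n + 1) →₀ ℕ :=
  Finsupp.equivFunOnFinite.symm (Fin.snoc d b)

@[simp]
theorem snocExp_castSucc (d : Fin n →₀ ℕ) (b : ℕ) (j : Fin n) : snocExp d b j.castSucc = d j :=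
  Fin.snoc_castSucc (α := fun _ ↦ ℕ) ..

@[simp]
theorem snocExp_last (d : Fin n →₀ ℕ) (b : ℕ) : snocExp d b (Fin.last n) = b :=
  Fin.snoc_last (α := fun _ ↦ ℕ) ..

theorem exists_snocExp_eq (e : Fin (n + 1) →₀ ℕ) : ∃ d, snocExp d (e (Fin.last n)) = e :=
  ⟨e.comapDomain Fin.castSucc (Fin.castSucc_injective n).injOn, Finsupp.ext fun j ↦ by
    refine Fin.lastCases ?_ (fun j ↦ ?_) j <;> simp⟩

theorem snocExp_eq_add (d : Fin n →₀ ℕ) (b : ℕ) :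
    snocExp d b = Finsupp.single (Fin.last n) b + d.mapDomain Fin.castSucc := by
  ext j
  refine Fin.lastCases ?_ (fun j ↦ ?_) j
  · simp [Finsupp.mapDomain_of_notMem_range]
  · simp [Finsupp.mapDomain_apply (Fin.castSucc_injective n), (Fin.castSucc_lt_last j).ne]

theorem degree_snocExp (d : Fin n →₀ ℕ) (b : ℕ) : (snocExp d b).degree = d.degree + b := by
  simp [Finsupp.degree_eq_sum, Fin.sum_univ_castSucc]

theorem card_support_snocExp (d : Fin n →₀ ℕ) (b : ℕ) :
    (snocExp d b).support.card = d.support.card + if b = 0 then 0 else 1 := by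
  have card_support {m : ℕ} (e : Fin m →₀ ℕ) :
      e.support.card = ∑ j, if e j = 0 then 0 else 1 := by
    simp_rw [← ite_not (e _ = 0), ← Finset.card_filter]
    congr
    ext j
    simp
  simp [card_support, Fin.sum_univ_castSucc]

theorem monomialSign_snocExp (w : Wgroup n) (d : Fin n →₀ ℕ) (b : ℕ) :
    monomialSign (inclW n w).left (snocExp d b) = monomialSign w.left d := by
  simp [monomialSign, Fin.prod_univ_castSucc, inclW, extendSigns]

theorem inclPerm_castSucc (σ : Perm (Fin n)) (j : Fin n) :
    inclPerm n σ j.castSucc = (σ j).castSucc :=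
  inclPermLe_apply_lt (Nat.le_succ n) σ j.castSucc (by simp)

theorem inclPerm_last (σ : Perm (Fin n)) : inclPerm n σ (Fin.last n) = Fin.last n :=
  inclPermLe_apply_not_lt (Nat.le_succ n) σ (Fin.last n) (by simp)

theorem equivMapDomain_inclPerm_symm_snocExp (σ : Perm (Fin n)) (d : Fin n →₀ ℕ) (b : ℕ) :
    (snocExp d b).equivMapDomain (inclPerm n σ).symm =
      snocExp (d.equivMapDomain σ.symm) b := by
  ext j
  rw [Finsupp.equivMapDomain_symm_apply]
  refine Fin.lastCases ?_ (fun j ↦ ?_) j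
  · simp [inclPerm_last]
  · simp [inclPerm_castSucc]

/-- The coefficient of `x_{n+1} ^ b` in a polynomial, as a polynomial in `x_1, …, x_n`. -/
noncomputable def lastCoeff (n b : ℕ) :
    MvPolynomial (Fin (n + 1)) ℚ →ₗ[ℚ] MvPolynomial (Fin n) ℚ where
  toFun p := killCompl (Fin.castSucc_injective n) (p.divMonomial (.single (Fin.last n) b))
  map_add' p q := by rw [add_divMonomial, map_add]
  map_smul' c p := by
    ext d
    simp [coeff_killCompl, coeff_divMonomial]

theorem coeff_lastCoeff (b : ℕ) (p : MvPolynomial (Fin (n + 1)) ℚ) (d : Fin n →₀ ℕ) :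
    coeff d (lastCoeff n b p) = coeff (snocExp d b) p := by
  rw [snocExp_eq_add, ← coeff_divMonomial, ← coeff_killCompl (Fin.castSucc_injective n)]
  rfl

theorem setLastToZero_eq_killCompl (n : ℕ) :
    setLastToZero n = killCompl (Fin.castSucc_injective n) := by
  refine algHom_ext fun j ↦ Fin.lastCases ?_ (fun j ↦ ?_) j
  · simp [setLastToZero, killCompl]
  · rw [← rename_X, killCompl_rename_app]
    simp [setLastToZero]

theorem lastCoeff_zero (n : ℕ) : lastCoeff n 0 = (setLastToZero n).toLinearMap := by
  refine LinearMap.ext fun p ↦ ?_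
  ext d
  simp [setLastToZero_eq_killCompl, coeff_lastCoeff, coeff_killCompl, snocExp_eq_add]

theorem eq_zero_of_lastCoeff_eq_zero {p : MvPolynomial (Fin (n + 1)) ℚ}
    (h : ∀ b, lastCoeff n b p = 0) : p = 0 := by
  ext e
  obtain ⟨d, hd⟩ := exists_snocExp_eq e
  rw [← hd, ← coeff_lastCoeff, h, coeff_zero, coeff_zero]

theorem lastCoeff_mem_repHom (b : ℕ) :
    lastCoeff n b ∈ RepHom ((wPolyRep (n + 1)).comp (inclW n)) (wPolyRep n) := fun w p ↦ by
  ext d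
  change coeff d (lastCoeff n b (wPolyRep (n + 1) (inclW n w) p)) = _
  simp only [coeff_lastCoeff, coeff_wPolyRep, monomialSign_snocExp]
  rw [← equivMapDomain_inclPerm_symm_snocExp]
  rfl

theorem lastCoeff_zero_mem_exactVars {k i : ℕ} {p : MvPolynomial (Fin (n + 1)) ℚ}
    (hp : p ∈ exactVars (Fin (n + 1)) ℚ k i) : lastCoeff n 0 p ∈ exactVars (Fin n) ℚ k i := by
  refine mem_exactVars.2 fun d hd ↦ ?_
  rw [coeff_lastCoeff] at hd
  simpa [degree_snocExp, card_support_snocExp] using mem_exactVars.1 hp _ hd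

theorem lastCoeff_mem_exactVars {b k i : ℕ} (hb : b ≠ 0) {p : MvPolynomial (Fin (n + 1)) ℚ}
    (hp : p ∈ exactVars (Fin (n + 1)) ℚ (k + 1) i) :
    lastCoeff n b p ∈ exactVars (Fin n) ℚ k (i - b) := by
  refine mem_exactVars.2 fun d hd ↦ ?_
  rw [coeff_lastCoeff] at hd
  have := mem_exactVars.1 hp _ hd
  rw [degree_snocExp, card_support_snocExp, if_neg hb] at this
  lia

theorem lastCoeff_replaceExp {a : ℕ} (ha : a ≠ 0) (p : MvPolynomial (Fin (n + 1)) ℚ) :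
    lastCoeff n 0 (replaceExp 0 a p) = replaceExp 0 a (lastCoeff n 0 p) := by
  ext d
  have snocExp_update (l : Fin n) :
      (snocExp d 0).update l.castSucc 0 = snocExp (d.update l 0) 0 := by
    classical
    ext j
    refine Fin.lastCases ?_ (fun j ↦ ?_) j
    · simp [Finsupp.update_apply, (Fin.castSucc_lt_last l).ne']
    · simp [Finsupp.update_apply]
  simp [coeff_lastCoeff, coeff_replaceExp, Fin.sum_univ_castSucc, ha.symm, snocExp_update]

theorem lastCoeff_zero_mem_homogeneousSubmodule {i : ℕ} {p : MvPolynomial (Fin (n + 1)) ℚ}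
    (hp : p ∈ homogeneousSubmodule (Fin (n + 1)) ℚ i) :
    lastCoeff n 0 p ∈ homogeneousSubmodule (Fin n) ℚ i := by
  refine mem_homogeneousSubmodule_iff_coeff.2 fun d hd ↦ ?_
  rw [coeff_lastCoeff] at hd
  rw [← mem_homogeneousSubmodule_iff_coeff.1 hp _ hd, degree_snocExp, add_zero]

end LastCoeff

section PointwiseStabilizer

variable {n : ℕ} {V : Type*} [AddCommGroup V] [Module ℚ V] {ρ : Representation ℚ (Wgroup n) V}

/-- The elements of `W_n` fixing the variable `x_j` for every `j ∈ J`. -/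
def pointwiseStabilizer (J : Finset (Fin n)) : Set (Wgroup n) :=
  {w | ∀ j ∈ J, w.left j = 1 ∧ w.right j = j}

theorem coeff_wPolyRep_of_mem_pointwiseStabilizer {e : Fin n →₀ ℕ} {w : Wgroup n}
    (hw : w ∈ pointwiseStabilizer e.support) (p : MvPolynomial (Fin n) ℚ) :
    coeff e (wPolyRep n w p) = coeff e p := by
  have sign_eq : monomialSign w.left e = 1 := Finset.prod_eq_one fun j _ ↦ by
    by_cases hj : j ∈ e.support
    · simp [(hw j hj).1]
    · simp [Finsupp.notMem_support_iff.1 hj]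
  have perm_eq : e.equivMapDomain w.right.symm = e := by
    ext j
    rw [Finsupp.equivMapDomain_symm_apply]
    by_cases hj : j ∈ e.support
    · rw [(hw j hj).2]
    · have hwj : w.right j ∉ e.support := fun h ↦ hj (w.right.injective (hw _ h).2 ▸ h)
      rw [Finsupp.notMem_support_iff.1 hj, Finsupp.notMem_support_iff.1 hwj]
  rw [coeff_wPolyRep, sign_eq, perm_eq, one_mul]

theorem exists_coeff_ne_zero_forall_pointwiseStabilizer {f : V →ₗ[ℚ] MvPolynomial (Fin n) ℚ}
    (hf : f ∈ RepHom ρ (wPolyRep n)) (hf0 : f ≠ 0) :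
    ∃ u e, coeff e (f u) ≠ 0 ∧ ∃ v ≠ 0, ∀ w ∈ pointwiseStabilizer e.support, ρ w v = v := by
  obtain ⟨u, e, he⟩ : ∃ u e, coeff e (f u) ≠ 0 := by
    by_contra! hzero
    exact hf0 (LinearMap.ext fun u ↦ MvPolynomial.ext _ _ (hzero u))
  have ne_zero : lcoeff ℚ e ∘ₗ f ≠ 0 := fun h ↦ he (LinearMap.congr_fun h u)
  obtain ⟨v, hv, hfix⟩ := exists_apply_ne_zero_forall_fixed ρ ne_zero
  refine ⟨u, e, he, v, fun h ↦ hv (by rw [h, map_zero]), fun w hw ↦ hfix w ?_⟩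
  refine LinearMap.ext fun u ↦ ?_
  simp [hf w u, coeff_wPolyRep_of_mem_pointwiseStabilizer hw]

section Fixed

variable {J : Finset (Fin n)} {p : MvPolynomial (Fin n) ℚ}

theorem rename_eq_of_forall_pointwiseStabilizer
    (hp : ∀ w ∈ pointwiseStabilizer J, wPolyRep n w p = p) {σ : Perm (Fin n)}
    (hσ : ∀ j ∈ J, σ j = j) : rename σ p = p := by
  rw [← wPolyRep_inr]
  exact hp _ fun j hj ↦ ⟨rfl, hσ j hj⟩

theorem even_of_forall_pointwiseStabilizer
    (hp : ∀ w ∈ pointwiseStabilizer J, wPolyRep n w p = p) {l : Fin n} (hl : l ∉ J)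
    {d : Fin n →₀ ℕ} (hd : coeff d p ≠ 0) : Even (d l) := by
  have hfix := congrArg (coeff d) (hp (SemidirectProduct.inl (Function.update 1 l (-1)))
    fun j hj ↦ ⟨Function.update_of_ne (ne_of_mem_of_not_mem hj hl) _ _, rfl⟩)
  have sign_eq : monomialSign (Function.update 1 l (-1)) d = (-1) ^ d l := by
    rw [monomialSign, Fintype.prod_eq_single l fun j hj ↦ by simp [hj]]
    simp
  rw [coeff_wPolyRep, SemidirectProduct.left_inl, sign_eq, SemidirectProduct.right_inl,
    ← Perm.inv_def, inv_one, Perm.one_def, Finsupp.equivMapDomain_refl] at hfix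
  exact (neg_one_pow_eq_one_iff_even (by norm_num)).1 (mul_eq_right₀ hd |>.1 hfix)

end Fixed

end PointwiseStabilizer

section ExactVarsHom

variable {n : ℕ} {V V' : Type*} [AddCommGroup V] [Module ℚ V] [AddCommGroup V'] [Module ℚ V']
  {ρ : Representation ℚ (Wgroup n) V} {ρ' : Representation ℚ (Wgroup (n + 1)) V'}
  {ι : V →ₗ[ℚ] V'} {j k i i' : ℕ}

/-- The equivariant maps from a representation of `W_n` to the polynomials all of whose monomials
have degree `i` and involve exactly `k` variables. -/
noncomputable abbrev exactVarsHom (ρ : Representation ℚ (Wgroup n) V) (k i : ℕ) :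
    Submodule ℚ (V →ₗ[ℚ] MvPolynomial (Fin n) ℚ) :=
  repHomInto ρ (wPolyRep n) (exactVars (Fin n) ℚ k i)

theorem replaceExp_eq_zero_of_lt {a : ℕ} (h : i < a) {p : MvPolynomial (Fin n) ℚ}
    (hp : p ∈ homogeneousSubmodule (Fin n) ℚ i) : replaceExp a 0 p = 0 := by
  ext d
  rw [coeff_replaceExp, coeff_zero]
  refine Finset.sum_eq_zero fun l _ ↦ ite_eq_right_iff.2 fun hl ↦ ?_
  by_contra hd
  have := degree_update_add d l a
  rw [mem_homogeneousSubmodule_iff_coeff.1 hp _ hd] at this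
  lia

/-- A nonzero equivariant map to polynomials in `j` variables yields a nonzero `v : V` fixed by the
pointwise stabilizer of only `j` variables, so all remaining variables in `g v` can be negated and
permuted freely. -/
theorem eq_zero_of_replaceExp_comp_eq_zero (hρ : IsIrreducibleRep ρ)
    (hne : exactVarsHom ρ j i' ≠ ⊥) (hjk : j < k) {g : V →ₗ[ℚ] MvPolynomial (Fin n) ℚ}
    (hg : g ∈ exactVarsHom ρ k i)
    (h : ∀ a ∈ (Finset.Icc 1 i).filter Even, replaceExp a 0 ∘ₗ g = 0) : g = 0 := by
  obtain ⟨f, hf, hf0⟩ := Submodule.exists_mem_ne_zero_of_ne_bot hne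
  obtain ⟨hg, hgk⟩ := mem_repHomInto.1 hg
  obtain ⟨u, e, he, v, hv, hfix⟩ :=
    exists_coeff_ne_zero_forall_pointwiseStabilizer hf.1 hf0
  have g_fix (w) (hw : w ∈ pointwiseStabilizer e.support) : wPolyRep n w (g v) = g v := by
    rw [← hg, hfix w hw]
  have card_eq : e.support.card = j := (mem_exactVars.1 ((mem_repHomInto.1 hf).2 u) e he).2
  refine hρ.eq_zero_of_apply_eq_zero hg hv (eq_zero_of_replaceExp_eq_zero (J := e.support)
    (fun d hd ↦ ?_) (fun d hd l hl ↦ even_of_forall_pointwiseStabilizer g_fix hl hd)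
    (fun l hl l' hl' d ↦ ?_) fun a ha ha0 ↦ ?_)
  · rwa [card_eq, (mem_exactVars.1 (hgk v) d hd).2]
  · have swap_fix (m) (hm : m ∈ e.support) : swap l l' m = m :=
      swap_apply_of_ne_of_ne (ne_of_mem_of_not_mem hm hl) (ne_of_mem_of_not_mem hm hl')
    nth_rw 2 [← rename_eq_of_forall_pointwiseStabilizer g_fix swap_fix]
    rw [coeff_rename_equiv, symm_swap]
  · rcases le_or_gt a i with hai | hai
    · exact LinearMap.congr_fun (h a (by simp [ha, hai, Nat.one_le_iff_ne_zero, ha0])) v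
    · exact replaceExp_eq_zero_of_lt hai (exactVars_le_homogeneousSubmodule k i (hgk v))

theorem replaceExp_comp_mem_exactVarsHom_of_lower {a : ℕ}
    (ha : a ∈ (Finset.Icc 1 i).filter Even) {g : V →ₗ[ℚ] MvPolynomial (Fin n) ℚ}
    (hg : g ∈ exactVarsHom ρ (k + 1) i) : replaceExp a 0 ∘ₗ g ∈ exactVarsHom ρ k (i - a) := by
  obtain ⟨ha, heven⟩ := Finset.mem_filter.1 ha
  exact comp_mem_repHomInto hg (replaceExp_mem_repHom heven Even.zero) fun _ ↦
    replaceExp_mem_exactVars_of_lower (Nat.one_le_iff_ne_zero.1 (Finset.mem_Icc.1 ha).1)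

theorem replaceExp_comp_mem_exactVarsHom_of_raise {a : ℕ}
    (ha : a ∈ (Finset.Icc 1 i).filter Even) {g : V →ₗ[ℚ] MvPolynomial (Fin n) ℚ}
    (hg : g ∈ exactVarsHom ρ k (i - a)) : replaceExp 0 a ∘ₗ g ∈ exactVarsHom ρ (k + 1) i := by
  obtain ⟨ha, heven⟩ := Finset.mem_filter.1 ha
  exact comp_mem_repHomInto hg (replaceExp_mem_repHom Even.zero heven) fun _ ↦
    replaceExp_mem_exactVars_of_raise (Nat.one_le_iff_ne_zero.1 (Finset.mem_Icc.1 ha).1)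
      (Finset.mem_Icc.1 ha).2

/-- The operator `g ↦ ∑ Rₐ Tₐ g`, with `Tₐ` replacing the exponent `a` by `0` and `Rₐ` its adjoint,
is injective, hence surjective on this finite-dimensional space. -/
theorem exists_sum_replaceExp_comp_eq (hρ : IsIrreducibleRep ρ)
    (hne : exactVarsHom ρ j i' ≠ ⊥) (hjk : j ≤ k) {g : V →ₗ[ℚ] MvPolynomial (Fin n) ℚ}
    (hg : g ∈ exactVarsHom ρ (k + 1) i) : ∃ g' ∈ exactVarsHom ρ (k + 1) i,
      ∑ a ∈ (Finset.Icc 1 i).filter Even, replaceExp 0 a ∘ₗ replaceExp a 0 ∘ₗ g' = g := by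
  let Θ : Module.End ℚ (V →ₗ[ℚ] MvPolynomial (Fin n) ℚ) :=
    ∑ a ∈ (Finset.Icc 1 i).filter Even,
      (replaceExp 0 a).compRight ℚ ∘ₗ (replaceExp a 0).compRight ℚ
  have Θ_apply (g) : Θ g = ∑ a ∈ (Finset.Icc 1 i).filter Even,
      replaceExp 0 a ∘ₗ replaceExp a 0 ∘ₗ g := by
    simp [Θ]
  have Θ_mem (g) (hg : g ∈ exactVarsHom ρ (k + 1) i) : Θ g ∈ exactVarsHom ρ (k + 1) i :=
    Θ_apply g ▸ Submodule.sum_mem _ fun a ha ↦ replaceExp_comp_mem_exactVarsHom_of_raise ha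
      (replaceExp_comp_mem_exactVarsHom_of_lower ha hg)
  have : Module.Finite ℚ (exactVarsHom ρ (k + 1) i) := hρ.finite_repHomInto
  have disj : Disjoint (exactVarsHom ρ (k + 1) i) (LinearMap.ker Θ) := by
    refine LinearMap.disjoint_ker.2 fun g hg hΘ ↦
      eq_zero_of_replaceExp_comp_eq_zero hρ hne (Nat.lt_succ_of_le hjk) hg
        fun a ha ↦ LinearMap.ext fun v ↦ replaceExp_eq_zero_of_sum_eq_zero ?_ a ha
    simpa [Θ_apply] using LinearMap.congr_fun hΘ v
  obtain ⟨g', hg', h⟩ := (map_eq_of_disjoint_ker Θ_mem disj).ge hg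
  exact ⟨g', hg', (Θ_apply g').symm.trans h⟩

theorem exactVarsHom_le_map_of_ne_bot (hρ : IsIrreducibleRep ρ)
    (hne : exactVarsHom ρ j i' ≠ ⊥) (hjk : j ≤ k)
    (lift : ∀ a ∈ (Finset.Icc 1 i).filter Even, exactVarsHom ρ k (i - a) ≤
      (exactVarsHom ρ' k (i - a)).map (homMap ι (lastCoeff n 0))) :
    exactVarsHom ρ (k + 1) i ≤ (exactVarsHom ρ' (k + 1) i).map (homMap ι (lastCoeff n 0)) := by
  intro g hg
  obtain ⟨g', hg', rfl⟩ := exists_sum_replaceExp_comp_eq hρ hne hjk hg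
  refine Submodule.sum_mem _ fun a ha ↦ ?_
  obtain ⟨h, hh, h_lift⟩ := lift a ha (replaceExp_comp_mem_exactVarsHom_of_lower ha hg')
  refine ⟨replaceExp 0 a ∘ₗ h, replaceExp_comp_mem_exactVarsHom_of_raise ha hh,
    LinearMap.ext fun v ↦ ?_⟩
  have ha0 : a ≠ 0 := by
    rintro rfl
    simp at ha
  simp [← h_lift, lastCoeff_replaceExp ha0]

theorem eq_zero_of_homMap_lastCoeff_eq_zero (hρ' : IsIrreducibleRep ρ') (hι : ι ≠ 0)
    {f : V' →ₗ[ℚ] MvPolynomial (Fin (n + 1)) ℚ} (hf : f ∈ RepHom ρ' (wPolyRep (n + 1)))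
    (h : ∀ b, homMap ι (lastCoeff n b) f = 0) : f = 0 := by
  obtain ⟨v, hv⟩ := DFunLike.ne_iff.1 hι
  exact hρ'.eq_zero_of_apply_eq_zero hf hv
    (eq_zero_of_lastCoeff_eq_zero fun b ↦ LinearMap.congr_fun (h b) v)

theorem homMap_lastCoeff_eq_zero (hι : ι ∈ RepHom ρ (ρ'.comp (inclW n)))
    (hbot : ∀ j < k, ∀ i' ≤ i, exactVarsHom ρ j i' = ⊥)
    {f : V' →ₗ[ℚ] MvPolynomial (Fin (n + 1)) ℚ} (hf : f ∈ exactVarsHom ρ' k i) {b : ℕ}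
    (hb : b ≠ 0) : homMap ι (lastCoeff n b) f = 0 := by
  cases k with
  | zero =>
    refine LinearMap.ext fun v ↦ MvPolynomial.ext _ _ fun d ↦ ?_
    rw [homMap_apply, coeff_lastCoeff, LinearMap.zero_apply, coeff_zero]
    by_contra hd
    have := (mem_exactVars.1 ((mem_repHomInto.1 hf).2 _) _ hd).2
    simp [card_support_snocExp, hb] at this
  | succ k =>
    have : homMap ι (lastCoeff n b) f ∈ exactVarsHom ρ k (i - b) :=
      homMap_mem_repHomInto hι (lastCoeff_mem_repHom b) (fun _ ↦ lastCoeff_mem_exactVars hb) hf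
    rwa [hbot k (Nat.lt_succ_self k) _ (Nat.sub_le i b), Submodule.mem_bot] at this

theorem exactVarsHom_eq_bot_succ (hρ' : IsIrreducibleRep ρ') (hι0 : ι ≠ 0)
    (hι : ι ∈ RepHom ρ (ρ'.comp (inclW n)))
    (hbot : ∀ j < k, ∀ i' ≤ i, exactVarsHom ρ j i' = ⊥) :
    ∀ j < k, ∀ i' ≤ i, exactVarsHom ρ' j i' = ⊥ := by
  refine fun j hj i' hi ↦ (Submodule.eq_bot_iff _).2 fun f hf ↦
    eq_zero_of_homMap_lastCoeff_eq_zero hρ' hι0 hf.1 fun b ↦ ?_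
  rcases eq_or_ne b 0 with rfl | hb
  · have : homMap ι (lastCoeff n 0) f ∈ exactVarsHom ρ j i' :=
      homMap_mem_repHomInto hι (lastCoeff_mem_repHom 0) (fun _ ↦ lastCoeff_zero_mem_exactVars) hf
    rwa [hbot j hj i' hi, Submodule.mem_bot] at this
  · exact homMap_lastCoeff_eq_zero hι
      (fun j' hj' i'' hi'' ↦ hbot j' (hj'.trans hj) i'' (hi''.trans hi)) hf hb

end ExactVarsHom

theorem exists_perm_fixing_mapsTo {α : Type*} [Finite α] [DecidableEq α] {J K A : Finset α}
    (hJK : J ⊆ K) (h : (A \ J).card ≤ (K \ J).card) :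
    ∃ s : Perm α, (∀ j ∈ J, s j = j) ∧ ∀ a ∈ A, s a ∈ K := by
  have := Fintype.ofFinite α
  obtain ⟨f⟩ : Nonempty (↥(A \ J) ↪ ↥(K \ J)) :=
    Function.Embedding.nonempty_of_card_le (by simpa only [Fintype.card_coe] using h)
  let g (a : α) : α := if ha : a ∈ A \ J then f ⟨a, ha⟩ else a
  have g_mem (a) (ha : a ∈ A \ J) : g a ∈ K ∧ g a ∉ J := by
    simpa only [g, dif_pos ha] using Finset.mem_sdiff.1 (f ⟨a, ha⟩).2
  have g_of_mem (j) (hj : j ∈ J) : g j = j := dif_neg fun hj' ↦ (Finset.mem_sdiff.1 hj').2 hj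
  have g_inj : Set.InjOn g (J ∪ A : Finset α) := by
    rw [← Finset.union_sdiff_self_eq_union, Finset.coe_union,
      Set.injOn_union (Finset.disjoint_coe.2 Finset.disjoint_sdiff)]
    refine ⟨fun a ha b hb hab ↦ ?_, fun a ha b hb hab ↦ ?_, fun a ha b hb hab ↦ ?_⟩
    · rwa [g_of_mem a ha, g_of_mem b hb] at hab
    · simpa only [g, dif_pos (Finset.mem_coe.1 ha), dif_pos (Finset.mem_coe.1 hb),
        Subtype.coe_inj, f.apply_eq_iff_eq, Subtype.mk.injEq] using hab
    · exact (g_mem b hb).2 (hab ▸ (g_of_mem a ha).symm ▸ ha)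
  obtain ⟨s, hs⟩ := Finset.exists_equiv_extend_of_card_eq (t := Finset.univ) (by simp)
    (Finset.subset_univ _) g_inj
  have s_apply (a) (ha : a ∈ J ∪ A) : s.trans (subtypeUnivEquiv Finset.mem_univ) a = g a := hs a ha
  refine ⟨s.trans (subtypeUnivEquiv Finset.mem_univ), fun j hj ↦ ?_, fun a ha ↦ ?_⟩
  · rw [s_apply j (Finset.mem_union_left A hj), g_of_mem j hj]
  · rw [s_apply a (Finset.mem_union_right J ha)]
    by_cases haJ : a ∈ J
    · exact hJK ((g_of_mem a haJ).symm ▸ haJ)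
    · exact (g_mem a (Finset.mem_sdiff.2 ⟨ha, haJ⟩)).1

section HomogeneousHom

variable {σ τ R : Type*} [CommSemiring R]

theorem killCompl_mem_homogeneousSubmodule {κ : τ → σ} (hκ : Function.Injective κ) {i : ℕ}
    {p : MvPolynomial σ R} (hp : p ∈ homogeneousSubmodule σ R i) :
    killCompl hκ p ∈ homogeneousSubmodule τ R i := by
  refine mem_homogeneousSubmodule_iff_coeff.2 fun d hd ↦ ?_
  rw [coeff_killCompl] at hd
  rw [← mem_homogeneousSubmodule_iff_coeff.1 hp _ hd, Finsupp.degree_mapDomain]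

theorem eq_zero_of_killCompl_eq_zero [Finite σ] {κ : τ → σ}
    (hκ : Function.Injective κ) {J K : Finset σ} (hJK : J ⊆ K) (hK : Set.range κ = K) {i : ℕ}
    (hcard : J.card + i ≤ K.card) {p : MvPolynomial σ R} (hp : p ∈ homogeneousSubmodule σ R i)
    (hfix : ∀ s : Perm σ, (∀ j ∈ J, s j = j) → rename s p = p) (h : killCompl hκ p = 0) :
    p = 0 := by
  classical
  ext d
  by_contra hd
  have card_le : (d.support \ J).card ≤ (K \ J).card := by
    have := mem_homogeneousSubmodule_iff_coeff.1 hp d hd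
    have := card_support_le_degree d
    have := Finset.card_le_card (d.support.sdiff_subset (t := J))
    rw [Finset.card_sdiff_of_subset hJK]
    lia
  obtain ⟨s, hs, hsK⟩ := exists_perm_fixing_mapsTo hJK card_le
  have support_subset : ↑(d.equivMapDomain s).support ⊆ Set.range κ := by
    rw [hK]
    intro l hl
    simpa using hsK (s.symm l) (by simpa using hl)
  apply hd
  rw [← hfix s.symm fun j hj ↦ s.symm_apply_eq.2 (hs j hj).symm, coeff_rename_equiv, symm_symm,
    ← Finsupp.mapDomain_comapDomain κ hκ _ support_subset, ← coeff_killCompl hκ, h, coeff_zero,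
    coeff_zero]

theorem IsIrreducibleRep.finrank_homogeneousHom_le {n i : ℕ} {V : Type*} [AddCommGroup V]
    [Module ℚ V] {ρ : Representation ℚ (Wgroup n) V} (hρ : IsIrreducibleRep ρ) (hn : 2 * i ≤ n) :
    finrank ℚ (repHomInto ρ (wPolyRep n) (homogeneousSubmodule (Fin n) ℚ i)) ≤
      finrank ℚ (homogeneousSubmodule (Fin (2 * i)) ℚ i) := by
  by_cases hbot : repHomInto ρ (wPolyRep n) (homogeneousSubmodule (Fin n) ℚ i) = ⊥
  · rw [hbot, finrank_bot]
    exact Nat.zero_le _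
  obtain ⟨f, hf, hf0⟩ := Submodule.exists_mem_ne_zero_of_ne_bot hbot
  obtain ⟨u, e, he, v, hv, hfix⟩ :=
    exists_coeff_ne_zero_forall_pointwiseStabilizer hf.1 hf0
  have card_le : e.support.card ≤ i :=
    mem_homogeneousSubmodule_iff_coeff.1 ((mem_repHomInto.1 hf).2 u) e he ▸
      card_support_le_degree e
  obtain ⟨K, hJK, -, hK⟩ := Finset.exists_subsuperset_card_eq e.support.subset_univ
    (n := 2 * i) (by lia) (by simpa using hn)
  have hκ : Function.Injective (K.orderEmbOfFin hK) := (K.orderEmbOfFin hK).injective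
  obtain ⟨Φ, hΦ⟩ := hρ.exists_injective_repHomInto hv (π := (killCompl hκ).toLinearMap)
    (Q := homogeneousSubmodule (Fin (2 * i)) ℚ i)
    (fun g hg ↦ killCompl_mem_homogeneousSubmodule hκ ((mem_repHomInto.1 hg).2 v))
    fun g hg ↦ eq_zero_of_killCompl_eq_zero hκ hJK (K.range_orderEmbOfFin hK) (by lia)
      ((mem_repHomInto.1 hg).2 v) fun s hs ↦ rename_eq_of_forall_pointwiseStabilizer
        (fun w hw ↦ by rw [← (mem_repHomInto.1 hg).1, hfix w hw]) hs
  exact LinearMap.finrank_le_finrank_of_injective hΦ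

end HomogeneousHom

section BranchingChain

variable {V : ℕ → Type*} [∀ n, AddCommGroup (V n)] [∀ n, Module ℚ (V n)]

/-- A sequence of `W_n`-representations, eventually irreducible and eventually connected by nonzero
`W_n`-equivariant maps `V_n → V_{n+1}`. -/
def IsBranchingChain (ρ : ∀ n, Representation ℚ (Wgroup n) (V n))
    (ι : ∀ n, V n →ₗ[ℚ] V (n + 1)) : Prop :=
  ∀ᶠ n in atTop, IsIrreducibleRep (ρ n) ∧ ι n ≠ 0 ∧
    ι n ∈ RepHom (ρ n) ((ρ (n + 1)).comp (inclW n))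

namespace IsBranchingChain

variable {ρ : ∀ n, Representation ℚ (Wgroup n) (V n)} {ι : ∀ n, V n →ₗ[ℚ] V (n + 1)}

theorem eventually_succ (h : IsBranchingChain ρ ι) :
    ∀ᶠ n in atTop, IsIrreducibleRep (ρ n) ∧ IsIrreducibleRep (ρ (n + 1)) ∧ ι n ≠ 0 ∧
      ι n ∈ RepHom (ρ n) ((ρ (n + 1)).comp (inclW n)) := by
  filter_upwards [h, (tendsto_add_atTop_nat 1).eventually h] with n hn hn'
  exact ⟨hn.1, hn'.1, hn.2⟩

theorem eventually_exactVarsHom_le_map_of_eq_bot (h : IsBranchingChain ρ ι) {k i : ℕ}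
    (hbot : ∀ᶠ n in atTop, ∀ j < k, ∀ i' ≤ i, exactVarsHom (ρ n) j i' = ⊥) :
    ∀ᶠ n in atTop, exactVarsHom (ρ n) k i ≤
      (exactVarsHom (ρ (n + 1)) k i).map (homMap (ι n) (lastCoeff n 0)) := by
  refine eventually_le_map_of_eventually_disjoint_ker ?_ ?_ ?_
  · exact h.mono fun n hn ↦ hn.1.finite_repHomInto
  · exact h.mono fun n hn f hf ↦ homMap_mem_repHomInto hn.2.2 (lastCoeff_mem_repHom 0)
      (fun _ ↦ lastCoeff_zero_mem_exactVars) hf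
  · filter_upwards [h.eventually_succ, hbot] with n ⟨_, hρ', hι0, hι⟩ hbot
    refine LinearMap.disjoint_ker.2 fun f hf hf0 ↦
      eq_zero_of_homMap_lastCoeff_eq_zero hρ' hι0 hf.1 fun b ↦ ?_
    rcases eq_or_ne b 0 with rfl | hb
    · exact hf0
    · exact homMap_lastCoeff_eq_zero hι hbot hf hb

theorem eventually_exactVarsHom_le_map (h : IsBranchingChain ρ ι) (k i : ℕ) :
    ∀ᶠ n in atTop, exactVarsHom (ρ n) k i ≤
      (exactVarsHom (ρ (n + 1)) k i).map (homMap (ι n) (lastCoeff n 0)) := by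
  induction k generalizing i with
  | zero => exact h.eventually_exactVarsHom_le_map_of_eq_bot (.of_forall (by simp))
  | succ k ih =>
    have bot_succ := h.eventually_succ.mono fun n ⟨_, hρ', hι0, hι⟩ ↦
      exactVarsHom_eq_bot_succ hρ' hι0 hι (k := k + 1) (i := i)
    rcases eventually_or_eventually_not_of_succ bot_succ with hbot | hne
    · exact h.eventually_exactVarsHom_le_map_of_eq_bot hbot
    · have lift := (eventually_all_finset ((Finset.Icc 1 i).filter Even)).2 fun a _ ↦ ih (i - a)
      filter_upwards [h, hne, lift] with n ⟨hρ, _⟩ hne lift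
      push Not at hne
      obtain ⟨j, hj, i', -, hne⟩ := hne
      exact exactVarsHom_le_map_of_ne_bot hρ hne (Nat.lt_succ_iff.1 hj) lift

theorem eventually_homogeneous_le_map (h : IsBranchingChain ρ ι) (i : ℕ) :
    ∀ᶠ n in atTop, repHomInto (ρ n) (wPolyRep n) (homogeneousSubmodule (Fin n) ℚ i) ≤
      (repHomInto (ρ (n + 1)) (wPolyRep (n + 1)) (homogeneousSubmodule (Fin (n + 1)) ℚ i)).map
        (homMap (ι n) (lastCoeff n 0)) := by
  have lift := (eventually_all_finset (Finset.range (i + 1))).2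
    fun k _ ↦ h.eventually_exactVarsHom_le_map k i
  filter_upwards [lift] with n lift g hg
  have sum_eq : ∑ k ∈ Finset.range (i + 1), exactVarsComponent k ∘ₗ g = g :=
    LinearMap.ext fun v ↦ by
      simpa using sum_exactVarsComponent ((mem_repHomInto.1 hg).2 v)
  rw [← sum_eq]
  refine Submodule.sum_mem _ fun k hk ↦ Submodule.map_mono
    (repHomInto_mono (exactVars_le_homogeneousSubmodule k i)) (lift k hk ?_)
  exact comp_mem_repHomInto hg (exactVarsComponent_mem_repHom k)
    fun _ ↦ exactVarsComponent_mem_exactVars k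

theorem eventuallyConst_finrank_map_homogeneous (h : IsBranchingChain ρ ι) {U : ℕ → Type*}
    [∀ n, AddCommGroup (U n)] [∀ n, Module ℚ (U n)] {τ : ∀ n, Representation ℚ (Wgroup n) (U n)}
    {π : ∀ n, MvPolynomial (Fin n) ℚ →ₗ[ℚ] U n} (hπ : ∀ n, π n ∈ RepHom (wPolyRep n) (τ n))
    {ψ : ∀ n, U (n + 1) →ₗ[ℚ] U n} (hψ : ∀ n, ψ n ∘ₗ π (n + 1) = π n ∘ₗ lastCoeff n 0) (i : ℕ) :
    EventuallyConst (fun n ↦ finrank ℚ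
      (repHomInto (ρ n) (τ n) ((homogeneousSubmodule (Fin n) ℚ i).map (π n)))) atTop := by
  have map_eq (n : ℕ) := map_compRight_repHomInto (ρ := ρ n) (hπ n)
    (homogeneousSubmodule_le_comap_wPolyRep i)
  refine eventuallyConst_finrank_of_eventually_le_map (s := fun n ↦ homMap (ι n) (ψ n))
    (B := finrank ℚ (homogeneousSubmodule (Fin (2 * i)) ℚ i)) ?_ ?_ ?_
  · exact h.mono fun n hn ↦ hn.1.finite_repHomInto
  · filter_upwards [h.eventually_homogeneous_le_map i] with n hn
    rw [← map_eq]
    refine Submodule.map_le_iff_le_comap.2 fun f hf ↦ ?_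
    obtain ⟨g, hg, rfl⟩ := hn hf
    refine ⟨π (n + 1) ∘ₗ g, map_eq (n + 1) ▸ Submodule.mem_map_of_mem hg, LinearMap.ext fun v ↦ ?_⟩
    exact LinearMap.congr_fun (hψ n) (g (ι n v))
  · filter_upwards [h, eventually_ge_atTop (2 * i)] with n ⟨hρ, _⟩ hn
    have : Module.Finite ℚ (repHomInto (ρ n) (wPolyRep n) (homogeneousSubmodule (Fin n) ℚ i)) :=
      hρ.finite_repHomInto
    rw [← map_eq]
    exact (Submodule.finrank_map_le _ _).trans (hρ.finrank_homogeneousHom_le hn)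

end IsBranchingChain

theorem WnIrrSystem.exists_isBranchingChain (S : WnIrrSystem) (lam : DoublePartition) :
    ∃ ι, IsBranchingChain (S.rep lam) ι := by
  have exists_branch (n : ℕ) : ∃ f : S.V lam n →ₗ[ℚ] S.V lam (n + 1), lam.minN ≤ n →
      f ≠ 0 ∧ f ∈ RepHom (S.rep lam n) ((S.rep lam (n + 1)).comp (inclW n)) := by
    by_cases hn : lam.minN ≤ n
    · exact (S.branch lam n hn).imp fun _ hf _ ↦ hf
    · exact ⟨0, fun hn' ↦ absurd hn' hn⟩
  choose ι hι using exists_branch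
  exact ⟨ι, eventually_atTop.2 ⟨lam.minN, fun n hn ↦ ⟨S.irr lam n hn, hι n hn⟩⟩⟩

end BranchingChain

section RootsOfUnity

variable {σ τ R K : Type*} {M : ℕ} [CommSemiring R] [CommSemiring K] [Algebra R K]

/-- The substitution sending the variables in the `j`-th cycle of length `M` embedded by `e` to
`x_j, z x_j, …, z ^ (M - 1) x_j`, and the remaining variables to `0`. -/
noncomputable def substRoots (e : τ × Fin M ↪ σ) (z : K) :
    MvPolynomial σ R →ₐ[R] MvPolynomial τ K :=
  aeval (Function.extend e (fun js ↦ C (z ^ (js.2 : ℕ)) * X js.1) 0)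

theorem substRoots_X_apply (e : τ × Fin M ↪ σ) (z : K) (js : τ × Fin M) :
    substRoots (R := R) e z (X (e js)) = C (z ^ (js.2 : ℕ)) * X js.1 := by
  rw [substRoots, aeval_X, e.injective.extend_apply]

theorem substRoots_X_of_notMem (e : τ × Fin M ↪ σ) (z : K) {l : σ} (hl : l ∉ Set.range e) :
    substRoots (R := R) e z (X l) = 0 := by
  rw [substRoots, aeval_X, Function.extend_apply' _ _ _ hl, Pi.zero_apply]

theorem constantCoeff_substRoots (e : τ × Fin M ↪ σ) (z : K) (p : MvPolynomial σ R) :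
    constantCoeff (substRoots e z p) = algebraMap R K (constantCoeff p) := by
  have h : (constantCoeff (R := K)).comp (substRoots e z : MvPolynomial σ R →ₐ[R] _).toRingHom =
      (algebraMap R K).comp constantCoeff := by
    refine ringHom_ext (fun r ↦ ?_) fun l ↦ ?_
    · simp [substRoots, MvPolynomial.algebraMap_apply]
    · by_cases hl : l ∈ Set.range e
      · obtain ⟨js, rfl⟩ := hl
        simp [substRoots_X_apply]
      · simp [substRoots_X_of_notMem _ _ hl]
  exact DFunLike.congr_fun h p

theorem substRoots_rename [NeZero M] (e : τ × Fin M ↪ σ) (z : K) (p : MvPolynomial τ R) :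
    substRoots e z (rename (fun j ↦ e (j, 0)) p) = map (algebraMap R K) p := by
  have h : (substRoots e z).comp (rename fun j ↦ e (j, 0)) = mapAlgHom (Algebra.ofId R K) :=
    algHom_ext fun j ↦ by simp [substRoots_X_apply]
  exact DFunLike.congr_fun h p

/-- The permutation rotating the `j`-th cycle of length `M` embedded by `e` by `s j` steps. -/
noncomputable def rotateCycles [NeZero M] (e : τ × Fin M ↪ σ) (s : τ → Fin M) : Perm σ :=
  Perm.viaEmbedding (prodCongrRight fun j ↦ Equiv.addRight (s j)) e

theorem substRoots_rename_rotateCycles [NeZero M] (e : τ × Fin M ↪ σ) {z : K} (hz : z ^ M = 1)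
    (s : τ → Fin M) (p : MvPolynomial σ R) :
    substRoots e z (rename (rotateCycles e s) p) =
      aeval (fun j ↦ C (z ^ (s j : ℕ)) * X j) (substRoots e z p) := by
  have h : (substRoots e z).comp (rename (rotateCycles e s)) =
      ((aeval fun j ↦ C (z ^ (s j : ℕ)) * X j).restrictScalars R).comp (substRoots e z) := by
    refine algHom_ext fun l ↦ ?_
    by_cases hl : l ∈ Set.range e
    · obtain ⟨⟨j, t⟩, rfl⟩ := hl
      have pow_add_mod : z ^ ((t + s j : Fin M) : ℕ) = z ^ (t : ℕ) * z ^ (s j : ℕ) := by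
        rw [Fin.val_add, ← pow_eq_pow_mod _ hz, pow_add]
      simp [rotateCycles, Perm.viaEmbedding_apply, substRoots_X_apply, pow_add_mod, mul_assoc]
    · simp [rotateCycles, Perm.viaEmbedding_apply_of_notMem _ _ _ hl, substRoots_X_of_notMem _ _ hl]
  exact DFunLike.congr_fun h p

variable [IsDomain K]

theorem dvd_of_coeff_substRoots_ne_zero [NeZero M] {e : τ × Fin M ↪ σ} {z : K}
    (hz : IsPrimitiveRoot z M) {p : MvPolynomial σ R} (hp : ∀ s : Perm σ, rename s p = p)
    {d : τ →₀ ℕ} (hd : coeff d (substRoots e z p) ≠ 0) (j : τ) : M ∣ d j := by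
  classical
  have coeff_rotate := congrArg (coeff d)
    (substRoots_rename_rotateCycles e hz.pow_eq_one (Pi.single j 1) p)
  have prod_pow : (d.prod fun l m ↦ (z ^ (((Pi.single j 1 : τ → Fin M) l : Fin M) : ℕ)) ^ m) =
      z ^ d j := by
    have z_pow_one : z ^ ((1 : Fin M) : ℕ) = z := by
      rw [Fin.val_one', ← pow_eq_pow_mod _ hz.pow_eq_one, pow_one]
    rw [Finsupp.prod_eq_single j (fun l _ hl ↦ by simp [Pi.single_eq_of_ne hl]) (by simp),
      Pi.single_eq_same, z_pow_one]
  rw [hp, coeff_aeval_C_mul_X, prod_pow] at coeff_rotate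
  exact hz.dvd_of_pow_eq_one _ (mul_right_cancel₀ hd (by rw [one_mul, ← coeff_rotate]))

theorem substRoots_mem_idealOfVars_pow [NeZero M] {e : τ × Fin M ↪ σ} {z : K}
    (hz : IsPrimitiveRoot z M) {p : MvPolynomial σ R} (hp : ∀ s : Perm σ, rename s p = p)
    (hp0 : constantCoeff p = 0) : substRoots e z p ∈ idealOfVars τ K ^ M := by
  refine (mem_pow_idealOfVars_iff _ _).2 fun d hd ↦ ?_
  rw [MvPolynomial.mem_support_iff] at hd
  have hd0 : d ≠ 0 := by
    rintro rfl
    exact hd (by rw [← constantCoeff_eq, constantCoeff_substRoots, hp0, map_zero])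
  obtain ⟨j, hj⟩ := Finsupp.ne_iff.1 hd0
  exact (Nat.le_of_dvd (Nat.pos_of_ne_zero hj) (dvd_of_coeff_substRoots_ne_zero hz hp hd j)).trans
    (Finsupp.le_degree j d)

end RootsOfUnity

section CoinvariantIdeal

variable {n : ℕ} {τ : Type*}

theorem wSymIdeal_le_comap_substRoots {K : Type*} [CommRing K] [IsDomain K] [Algebra ℚ K] {M : ℕ}
    [NeZero M] (e : τ × Fin M ↪ Fin n) {z : K} (hz : IsPrimitiveRoot z M) :
    wSymIdeal n ≤ (idealOfVars τ K ^ M).comap (substRoots e z) :=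
  Ideal.span_le.2 fun p ⟨hp, hp0⟩ ↦ substRoots_mem_idealOfVars_pow hz
    (fun s ↦ by rw [← wPolyRep_inr, hp]) hp0

theorem eq_zero_of_rename_mem_wSymIdeal {M i : ℕ} [NeZero M] (hi : i < M)
    (e : τ × Fin M ↪ Fin n) {p : MvPolynomial τ ℚ} (hp : p ∈ homogeneousSubmodule τ ℚ i)
    (h : rename (fun j ↦ e (j, 0)) p ∈ wSymIdeal n) : p = 0 := by
  have hmem := wSymIdeal_le_comap_substRoots e (Complex.isPrimitiveRoot_exp M (NeZero.ne M)) h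
  rw [Ideal.mem_comap, substRoots_rename, mem_pow_idealOfVars_iff] at hmem
  ext d
  by_contra hd
  have le_degree := hmem d (by simpa [coeff_map] using hd)
  rw [mem_homogeneousSubmodule_iff_coeff.1 hp d hd] at le_degree
  exact hi.not_ge le_degree

end CoinvariantIdeal

section HomogeneousRename

variable {σ τ R : Type*} [CommSemiring R]

variable (R) in
/-- The renaming of variables along `e` on homogeneous polynomials of degree `i`. -/
noncomputable def homogeneousRename (e : τ → σ) (i : ℕ) :
    homogeneousSubmodule τ R i →ₗ[R] homogeneousSubmodule σ R i :=
  (rename e).toLinearMap.restrict fun _ ↦ IsHomogeneous.rename_isHomogeneous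

theorem exists_rename_perm_comp_eq_monomial [Finite σ] [Fintype τ] (e : τ ↪ σ) {d : σ →₀ ℕ}
    (hd : d.degree ≤ Fintype.card τ) (r : R) :
    ∃ s : Perm σ, ∃ q, rename (s ∘ e) q = monomial d r := by
  classical
  obtain ⟨s, -, hs⟩ := exists_perm_fixing_mapsTo (J := ∅) (K := Finset.univ.map e)
    (A := d.support) (Finset.empty_subset _) (by simpa using (card_support_le_degree d).trans hd)
  refine ⟨s.symm, exists_rename_eq_of_vars_subset_range _ _
    (s.symm.injective.comp e.injective) fun l hl ↦ ?_⟩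
  obtain ⟨d', hd', hld⟩ := (mem_vars_iff_mem_support l).1 (Finset.mem_coe.1 hl)
  obtain rfl := Finset.mem_singleton.1 (support_monomial_subset hd')
  obtain ⟨j, -, hj⟩ := Finset.mem_map.1 (hs l hld)
  exact ⟨j, s.symm_apply_eq.2 hj⟩

theorem iSup_range_homogeneousRename [Finite σ] [Fintype τ] (e : τ ↪ σ) {i : ℕ}
    (hi : i ≤ Fintype.card τ) :
    ⨆ s : Perm σ, LinearMap.range (homogeneousRename R (s ∘ e) i) = ⊤ := by
  refine eq_top_iff.2 ((Submodule.map_le_map_iff_of_injective (Submodule.subtype_injective _) _ _).1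
    fun p hp ↦ ?_)
  rw [Submodule.map_subtype_top] at hp
  rw [← support_sum_monomial_coeff p]
  refine Submodule.sum_mem _ fun d hd ↦ ?_
  have hdi := mem_homogeneousSubmodule_iff_coeff.1 hp d (MvPolynomial.mem_support_iff.1 hd)
  obtain ⟨s, q, hq⟩ := exists_rename_perm_comp_eq_monomial e (hdi.trans_le hi) (coeff d p)
  have hqi : q ∈ homogeneousSubmodule τ R i :=
    (IsHomogeneous.rename_isHomogeneous_iff (s.injective.comp e.injective)).1
      (hq ▸ isHomogeneous_monomial _ hdi)
  exact ⟨_, Submodule.mem_iSup_of_mem s ⟨⟨q, hqi⟩, rfl⟩, hq⟩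

end HomogeneousRename

section Grade

variable {n i : ℕ}

/-- The `W_n`-representation on the homogeneous polynomials of degree `i`. -/
noncomputable def homogeneousRep (n i : ℕ) :
    Representation ℚ (Wgroup n) (homogeneousSubmodule (Fin n) ℚ i) :=
  (wPolyRep n).subrep _ (homogeneousSubmodule_le_comap_wPolyRep i)

/-- The specialisation `x_{n+1} ↦ 0` on homogeneous polynomials of degree `i`. -/
noncomputable def homogeneousSetLastToZero (n i : ℕ) :
    homogeneousSubmodule (Fin (n + 1)) ℚ i →ₗ[ℚ] homogeneousSubmodule (Fin n) ℚ i :=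
  (lastCoeff n 0).restrict fun _ ↦ lastCoeff_zero_mem_homogeneousSubmodule

/-- The projection of the homogeneous polynomials of degree `i` onto the degree-`i` piece of the
coinvariant algebra. -/
noncomputable def toGrade (n i : ℕ) : homogeneousSubmodule (Fin n) ℚ i →ₗ[ℚ] wCoinvGrade n i :=
  ((wSymIdeal n).restrictScalars ℚ).mkQ.submoduleMap _

theorem homogeneousRep_inr_homogeneousRename {τ : Type*} (s : Perm (Fin n)) (e : τ → Fin n)
    (q : homogeneousSubmodule τ ℚ i) :
    homogeneousRep n i (SemidirectProduct.inr s) (homogeneousRename ℚ e i q) =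
      homogeneousRename ℚ (s ∘ e) i q :=
  Subtype.ext ((wPolyRep_inr s _).trans (rename_rename ..))

theorem homogeneousSetLastToZero_homogeneousRename {τ : Type*} (e : τ → Fin n)
    (q : homogeneousSubmodule τ ℚ i) :
    homogeneousSetLastToZero n i (homogeneousRename ℚ (Fin.castSucc ∘ e) i q) =
      homogeneousRename ℚ e i q := by
  refine Subtype.ext ?_
  change lastCoeff n 0 (rename (Fin.castSucc ∘ e) (q : MvPolynomial τ ℚ)) = rename e q.1
  rw [lastCoeff_zero, setLastToZero_eq_killCompl, ← rename_rename]
  exact killCompl_rename_app _ _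

theorem homogeneousSetLastToZero_surjective :
    Function.Surjective (homogeneousSetLastToZero n i) := fun q ↦
  ⟨homogeneousRename ℚ (Fin.castSucc ∘ id) i q,
    (homogeneousSetLastToZero_homogeneousRename id q).trans (Subtype.ext (rename_id_apply q.1))⟩

theorem homogeneousSetLastToZero_mem_repHom :
    homogeneousSetLastToZero n i ∈
      RepHom ((homogeneousRep (n + 1) i).comp (inclW n)) (homogeneousRep n i) := fun w p ↦
  Subtype.ext (lastCoeff_mem_repHom 0 w p.1)

theorem toGrade_surjective : Function.Surjective (toGrade n i) :=
  LinearMap.submoduleMap_surjective _ _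

theorem toGrade_eq_zero_iff {p : homogeneousSubmodule (Fin n) ℚ i} :
    toGrade n i p = 0 ↔ (p : MvPolynomial (Fin n) ℚ) ∈ wSymIdeal n :=
  Subtype.ext_iff.trans (Submodule.Quotient.mk_eq_zero _)

variable {ρ : Representation ℚ (Wgroup (n + 1)) (wCoinvGrade (n + 1) i)}
  {φ : wCoinvGrade (n + 1) i →ₗ[ℚ] wCoinvGrade n i}

theorem mem_repHom_of_comp_toGrade {ρ' : Representation ℚ (Wgroup n) (wCoinvGrade n i)}
    (hρ : toGrade (n + 1) i ∈ RepHom (homogeneousRep (n + 1) i) ρ)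
    (hρ' : toGrade n i ∈ RepHom (homogeneousRep n i) ρ')
    (hφ : φ ∘ₗ toGrade (n + 1) i = toGrade n i ∘ₗ homogeneousSetLastToZero n i) :
    φ ∈ RepHom (ρ.comp (inclW n)) ρ' := fun w x ↦ by
  obtain ⟨p, rfl⟩ := toGrade_surjective x
  have hφ_apply := LinearMap.congr_fun hφ
  simp only [LinearMap.comp_apply] at hφ_apply
  rw [hφ_apply, ← hρ', ← homogeneousSetLastToZero_mem_repHom, ← hφ_apply]
  exact congrArg φ (hρ _ p).symm

theorem surjective_of_comp_toGrade
    (hφ : φ ∘ₗ toGrade (n + 1) i = toGrade n i ∘ₗ homogeneousSetLastToZero n i) :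
    Function.Surjective φ := by
  refine .of_comp (g := toGrade (n + 1) i) ?_
  rw [← LinearMap.coe_comp, hφ]
  exact toGrade_surjective.comp homogeneousSetLastToZero_surjective

theorem disjoint_range_ker_of_comp_toGrade {τ : Type*} {M : ℕ} [NeZero M] (hi : i < M)
    (hφ : φ ∘ₗ toGrade (n + 1) i = toGrade n i ∘ₗ homogeneousSetLastToZero n i)
    (e : τ × Fin M ↪ Fin n) :
    Disjoint (LinearMap.range
        (toGrade (n + 1) i ∘ₗ homogeneousRename ℚ (Fin.castSucc ∘ fun j ↦ e (j, 0)) i))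
      (LinearMap.ker φ) := by
  rw [LinearMap.disjoint_ker]
  rintro _ ⟨q, rfl⟩ hq
  rw [← LinearMap.comp_apply, ← LinearMap.comp_assoc, hφ, LinearMap.comp_apply,
    LinearMap.comp_apply, homogeneousSetLastToZero_homogeneousRename, toGrade_eq_zero_iff] at hq
  have hq0 : q = 0 := Subtype.ext (eq_zero_of_rename_mem_wSymIdeal hi e q.2 hq)
  rw [hq0, map_zero]

theorem span_orbit_eq_top_of_range_le {τ : Type*} [Fintype τ] (hi : i ≤ Fintype.card τ)
    {ρ : Representation ℚ (Wgroup n) (wCoinvGrade n i)}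
    (hρ : toGrade n i ∈ RepHom (homogeneousRep n i) ρ) (e : τ ↪ Fin n)
    {T : Submodule ℚ (wCoinvGrade n i)}
    (hT : LinearMap.range (toGrade n i ∘ₗ homogeneousRename ℚ e i) ≤ T) :
    Submodule.span ℚ {x | ∃ w, ∃ y, y ∈ T ∧ x = ρ w y} = ⊤ := by
  rw [eq_top_iff, ← LinearMap.range_eq_top.2 toGrade_surjective, LinearMap.range_eq_map,
    ← iSup_range_homogeneousRename e hi, Submodule.map_iSup]
  refine iSup_le fun s ↦ ?_
  rintro _ ⟨_, ⟨q, rfl⟩, rfl⟩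
  refine Submodule.subset_span ⟨SemidirectProduct.inr s, _, hT ⟨q, rfl⟩, ?_⟩
  rw [LinearMap.comp_apply, ← hρ, homogeneousRep_inr_homogeneousRename]

theorem exists_submodule_span_orbit_eq_top (hn : (i + 1) * (i + 1) ≤ n)
    (hρ : toGrade (n + 1) i ∈ RepHom (homogeneousRep (n + 1) i) ρ)
    (hφ : φ ∘ₗ toGrade (n + 1) i = toGrade n i ∘ₗ homogeneousSetLastToZero n i) :
    ∃ T : Submodule ℚ (wCoinvGrade (n + 1) i), Function.Injective (φ ∘ₗ T.subtype) ∧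
      LinearMap.range (φ ∘ₗ T.subtype) = ⊤ ∧
      Submodule.span ℚ {x | ∃ w, ∃ y, y ∈ T ∧ x = ρ w y} = ⊤ := by
  obtain ⟨e⟩ : Nonempty (Fin (i + 1) × Fin (i + 1) ↪ Fin n) :=
    Function.Embedding.nonempty_of_card_le (by simpa using hn)
  obtain ⟨T, range_le, hT⟩ := exists_le_injective_comp_subtype_range_eq_top
    (surjective_of_comp_toGrade hφ) (disjoint_range_ker_of_comp_toGrade i.lt_succ_self hφ e)
  exact ⟨T, hT.1, hT.2, span_orbit_eq_top_of_range_le (by simp) hρ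
    (((Function.Embedding.sectL _ 0).trans e).trans Fin.castSuccEmb) range_le⟩

end Grade

/-- **Statement 17.** For each fixed `i ≥ 0`, the sequence `{H^i(F′_n;ℚ)}` of cohomology
groups of the Lagrangian flag varieties, identified via Borel's theorem with the graded
pieces of the coinvariant algebras of the hyperoctahedral Weyl groups `W_n`, is
representation stable in the reversed-maps sense for the maps induced by `F′_n ↪ F′_{n+1}`
(i.e. by `x_{n+1} ↦ 0` on coinvariant algebras): the maps are eventually surjective and
split by subspaces with spanning `W_{n+1}`-orbit, and for each double partition `λ` the
multiplicity of `V(λ)_n` is eventually constant. -/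
theorem lagrangian_flag_coinvariant_stability (S : WnIrrSystem) (i : ℕ)
    -- the induced `W_n`-action on the coinvariant algebra
    (ρbar : ∀ n, Representation ℚ (Wgroup n) (WCoinv n))
    (hρbar : ∀ n (w : Wgroup n) (p : MvPolynomial (Fin n) ℚ),
      ρbar n w (((wSymIdeal n).restrictScalars ℚ).mkQ p) =
        ((wSymIdeal n).restrictScalars ℚ).mkQ (wPolyRep n w p))
    -- its restriction to the degree-`i` graded piece
    (ρgr : ∀ n, Representation ℚ (Wgroup n) ↥(wCoinvGrade n i))
    (hρgr : ∀ n w (x : ↥(wCoinvGrade n i)), (↑(ρgr n w x) : WCoinv n) = ρbar n w ↑x)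
    -- the reversed map on coinvariant algebras induced by `x_{n+1} ↦ 0`
    (ψ : ∀ n, WCoinv (n + 1) →ₗ[ℚ] WCoinv n)
    (hψ : ∀ n (p : MvPolynomial (Fin (n + 1)) ℚ),
      ψ n (((wSymIdeal (n + 1)).restrictScalars ℚ).mkQ p) =
        ((wSymIdeal n).restrictScalars ℚ).mkQ (setLastToZero n p))
    -- its restriction to the degree-`i` graded pieces
    (ψgr : ∀ n, ↥(wCoinvGrade (n + 1) i) →ₗ[ℚ] ↥(wCoinvGrade n i))
    (hψgr : ∀ n (x : ↥(wCoinvGrade (n + 1) i)), (↑(ψgr n x) : WCoinv n) = ψ n ↑x) :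
    -- consistency: the reversed maps are equivariant for `W_n ⊆ W_{n+1}`
    (∀ n (w : Wgroup n) (x : ↥(wCoinvGrade (n + 1) i)),
      ψgr n (ρgr (n + 1) (inclW n w) x) = ρgr n w (ψgr n x)) ∧
    -- Condition I′ (surjectivity) and Condition II′ (split injectivity, spanning orbit)
    (∃ N, ∀ n, N ≤ n →
      Function.Surjective (ψgr n) ∧
      ∃ W : Submodule ℚ ↥(wCoinvGrade (n + 1) i),
        Function.Injective ((ψgr n) ∘ₗ W.subtype) ∧
        LinearMap.range ((ψgr n) ∘ₗ W.subtype) = ⊤ ∧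
        Submodule.span ℚ {x : ↥(wCoinvGrade (n + 1) i) |
          ∃ (w : Wgroup (n + 1)) (y : ↥(wCoinvGrade (n + 1) i)),
            y ∈ W ∧ x = ρgr (n + 1) w y} = ⊤) ∧
    -- Condition III: multiplicity stability for each double partition
    (∀ lam : DoublePartition, ∃ N, lam.minN ≤ N ∧ ∀ n, N ≤ n →
      S.mult lam (ρgr n) = S.mult lam (ρgr N)) := by
  have hπ (n : ℕ) : ((wSymIdeal n).restrictScalars ℚ).mkQ ∈ RepHom (wPolyRep n) (ρbar n) :=
    fun w p ↦ (hρbar n w p).symm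
  have hψπ (n : ℕ) : ψ n ∘ₗ ((wSymIdeal (n + 1)).restrictScalars ℚ).mkQ =
      ((wSymIdeal n).restrictScalars ℚ).mkQ ∘ₗ lastCoeff n 0 :=
    LinearMap.ext fun p ↦ by rw [lastCoeff_zero]; exact hψ n p
  have hgr (n : ℕ) : toGrade n i ∈ RepHom (homogeneousRep n i) (ρgr n) :=
    fun w p ↦ Subtype.ext ((hπ n w p).trans (hρgr n w (toGrade n i p)).symm)
  have hφ (n : ℕ) : ψgr n ∘ₗ toGrade (n + 1) i = toGrade n i ∘ₗ homogeneousSetLastToZero n i :=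
    LinearMap.ext fun p ↦ Subtype.ext ((hψgr n _).trans (LinearMap.congr_fun (hψπ n) p.1))
  refine ⟨fun n ↦ mem_repHom_of_comp_toGrade (hgr (n + 1)) (hgr n) (hφ n),
    ⟨(i + 1) * (i + 1), fun n hn ↦ ⟨surjective_of_comp_toGrade (hφ n),
      exists_submodule_span_orbit_eq_top hn (hgr (n + 1)) (hφ n)⟩⟩, fun lam ↦ ?_⟩
  obtain ⟨ι, hι⟩ := S.exists_isBranchingChain lam
  have mult_eq (n : ℕ) : S.mult lam (ρgr n) =
      finrank ℚ (repHomInto (S.rep lam n) (ρbar n) (wCoinvGrade n i)) :=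
    finrank_repHom_eq_finrank_repHomInto (hρgr n)
  simp only [mult_eq]
  exact exists_ge_forall_eq_of_eventuallyConst
    (hι.eventuallyConst_finrank_map_homogeneous hπ hψπ i) lam.minN
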